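/- arXiv:2101.09386 — 2 statements merged into one kernel-verified Lean document; each statement's English description precedes it below -/
import Mathlib

section
/- Let K be a field of characteristic zero, n ≥ 1, and let Γ be a subgroup of GL_n(K). If for some positive integer ℓ the subgroup Γ^{(ℓ)} of Γ generated by the ℓ-th powers of elements of Γ is solvable, then Γ is virtually solvable. -/
open Matrix

/-- A group is virtually solvable if it has a solvable subgroup of finite index. -/
def IsVirtuallySolvable (G : Type*) [Group G] : Prop :=
  ∃ H : Subgroup G, H.FiniteIndex ∧ IsSolvable ↥H

/-!
Pass to an algebraic closure and let `ρ` be a finite-dimensional representation of a group `G`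
with a solvable normal subgroup `N` which contains all `ℓ`-th powers. By induction on the dimension,
`ρ(G)` is virtually solvable. If some subgroup `H` of finite index leaves a proper nonzero subspace
`W` invariant, the induction hypothesis applies to `H` acting on `W` and on `V ⧸ W`, and the
operators which are trivial on both commute.

Otherwise `ρ` is strongly irreducible, and a proper nonzero subspace has infinitely many translates.
So a normal subgroup whose image is commutative consists of scalars, as its joint eigenspaces are
finite in number and permuted by `G`. This extends to normal subgroups `B` with `[B, B]` scalar:
such a `B` is finite modulo scalars, so each of its elements has finitely many conjugates, and
its eigenspaces finitely many translates. Going up the derived series, `N` is scalar. Hence the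
scalar multiples of determinant `1` of the operators `ρ g` have bounded order, and therefore only
finitely many traces. As in Burnside's theorem on linear groups of bounded exponent, there are
finitely many of them because they span `End V`, so the scalars have finite index in `G`.
-/

section Groups

variable {G G' α : Type*} [Group G] [Group G']

theorem finiteIndex_of_finite_range {H : Subgroup G} (f : G → α) (hf : (Set.range f).Finite)
    (h : ∀ g g', f g = f g' → g⁻¹ * g' ∈ H) : H.FiniteIndex := by
  have := hf.to_subtype
  have : Finite (G ⧸ H) := by
    refine Finite.of_injective (fun q : G ⧸ H ↦ (⟨f q.out, q.out, rfl⟩ : Set.range f)) ?_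
    intro q q' hq
    rw [← q.out_eq', ← q'.out_eq']
    exact QuotientGroup.eq.mpr (h _ _ (congrArg Subtype.val hq))
  exact H.finiteIndex_of_finite_quotient

theorem quotient_ker_mk_eq_iff {M : Type*} [MulOneClass M] (f : G →* M) {a b : G} :
    (a : G ⧸ f.ker) = b ↔ f a = f b := by
  rw [QuotientGroup.eq, eq_comm (a := f a), f.eq_iff]

theorem isSolvable_subgroupOf (N H : Subgroup G) [Group.IsSolvable N] :
    Group.IsSolvable (N.subgroupOf H) :=
  Group.isSolvable_of_isSolvable_injective (f := H.subtype.subgroupComap N)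
    fun _ _ h ↦ Subtype.ext (Subtype.ext (congrArg N.subtype h))

theorem normal_subgroupOf_closure_pow (H : Subgroup G) (ℓ : ℕ) :
    ((Subgroup.closure {y | ∃ x ∈ H, y = x ^ ℓ}).subgroupOf H).Normal := by
  have hle : Subgroup.closure {y | ∃ x ∈ H, y = x ^ ℓ} ≤ H := by
    rw [Subgroup.closure_le]
    rintro _ ⟨x, hx, rfl⟩
    exact H.pow_mem hx ℓ
  rw [Subgroup.normal_subgroupOf_iff_le_normalizer hle, Subgroup.le_normalizer_closure_iff]
  rintro h hh _ ⟨x, hx, rfl⟩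
  exact Subgroup.subset_closure
    ⟨h * x * h⁻¹, H.mul_mem (H.mul_mem hh hx) (H.inv_mem hh), conj_pow.symm⟩

namespace IsVirtuallySolvable

theorem of_isSolvable [Group.IsSolvable G] : IsVirtuallySolvable G :=
  ⟨⊤, inferInstance, inferInstanceAs (Group.IsSolvable (⊤ : Subgroup G))⟩

theorem of_isSolvable_ker (f : G →* G') [Group.IsSolvable f.ker]
    (h : IsVirtuallySolvable G') : IsVirtuallySolvable G := by
  obtain ⟨H, hH, hsol⟩ := h
  have : Group.IsSolvable H := hsol
  have hker : f.ker ≤ H.comap f := by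
    rw [← MonoidHom.comap_bot]
    exact Subgroup.comap_mono bot_le
  refine ⟨H.comap f, ⟨?_⟩, Group.isSolvable_of_ker_le_range (Subgroup.inclusion hker)
    (f.subgroupComap H) fun g hg ↦ ⟨⟨g, congrArg Subtype.val hg⟩, rfl⟩⟩
  rw [H.index_comap]
  exact Subgroup.FiniteIndex.index_ne_zero

theorem of_finiteIndex_range (f : G →* G') [hf : f.range.FiniteIndex]
    (h : IsVirtuallySolvable G) : IsVirtuallySolvable G' := by
  obtain ⟨H, hH, hsol⟩ := h
  have : Group.IsSolvable H := hsol
  refine ⟨H.map f, ⟨?_⟩, Group.isSolvable_of_surjective (f.subgroupMap_surjective H)⟩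
  have : (H ⊔ f.ker).FiniteIndex := Subgroup.finiteIndex_of_le le_sup_left
  rw [H.index_map f]
  exact mul_ne_zero Subgroup.FiniteIndex.index_ne_zero Subgroup.FiniteIndex.index_ne_zero

theorem prod (h : IsVirtuallySolvable G) (h' : IsVirtuallySolvable G') :
    IsVirtuallySolvable (G × G') := by
  obtain ⟨H, hH, hsol⟩ := h
  obtain ⟨H', hH', hsol'⟩ := h'
  have : Group.IsSolvable H := hsol
  have : Group.IsSolvable H' := hsol'
  refine ⟨H.prod H', ⟨?_⟩,
    Group.isSolvable_of_isSolvable_injective (f := (H.prodEquiv H').toMonoidHom)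
      (H.prodEquiv H').injective⟩
  rw [Subgroup.index_prod]
  exact mul_ne_zero Subgroup.FiniteIndex.index_ne_zero Subgroup.FiniteIndex.index_ne_zero

end IsVirtuallySolvable

end Groups

section LinearAlgebra

open Module

variable {K V : Type*} [Field K] [AddCommGroup V] [Module K V] [FiniteDimensional K V]

theorem eq_of_forall_trace_mul_eq {S T : End K V}
    (h : ∀ R, LinearMap.trace K V (S * R) = LinearMap.trace K V (T * R)) : S = T := by
  let b := finBasis K V
  apply (LinearMap.toMatrix b b).injective
  rw [Matrix.ext_iff_trace_mul_right]
  intro A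
  simpa [LinearMap.trace_eq_matrix_trace K b, LinearMap.toMatrix_mul] using h (Matrix.toLin b b A)

-- An element `T` of `X` is determined by the traces of the products `T * s`, where `s` runs over a
-- basis of `End K V` contained in `X`.
theorem finite_of_finite_trace {X : Submonoid (End K V)}
    (hspan : Submodule.span K (X : Set (End K V)) = ⊤)
    (htrace : (LinearMap.trace K V '' X).Finite) : (X : Set (End K V)).Finite := by
  obtain ⟨S, hSX, hS, hli⟩ := exists_linearIndependent K (X : Set (End K V))
  have : Finite S := hli.finite
  let traces (T : End K V) (s : S) : K := LinearMap.trace K V (T * s)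
  have htraces : traces.Injective := by
    intro T T' hTT'
    refine eq_of_forall_trace_mul_eq fun R ↦ ?_
    have hR : R ∈ Submodule.span K S := by rw [hS, hspan]; trivial
    induction hR using Submodule.span_induction with
    | mem s hs => exact congrFun hTT' ⟨s, hs⟩
    | zero => simp
    | add A B _ _ hA hB => simp [mul_add, hA, hB]
    | smul c A _ hA => simp [hA]
  refine Set.Finite.of_finite_image ((Set.Finite.pi' fun _ ↦ htrace).subset ?_) htraces.injOn
  rintro _ ⟨T, hT, rfl⟩ s
  exact ⟨T * s, X.mul_mem hT (hSX s.2), rfl⟩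

theorem finite_trace_of_pow_eq_one [IsAlgClosed K] {m : ℕ} (hm : 0 < m) :
    (LinearMap.trace K V '' {T | T ^ m = 1}).Finite := by
  classical
  let roots : Multiset K := (Polynomial.nthRoots m (1 : K)).dedup
  refine ((Set.finite_Iic (finrank K V • roots)).image Multiset.sum).subset ?_
  rintro _ ⟨T, hT, rfl⟩
  refine ⟨T.charpoly.roots, Multiset.le_iff_count.mpr fun a ↦ ?_,
    (End.trace_eq_sum_roots_charpoly_of_splits (IsAlgClosed.splits _)).symm⟩
  by_cases ha : a ∈ T.charpoly.roots
  · have heig : End.HasEigenvalue T a :=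
      (End.hasEigenvalue_iff_isRoot_charpoly T a).mpr (Polynomial.isRoot_of_mem_roots ha)
    obtain ⟨v, hv⟩ := heig.exists_hasEigenvector
    have hroot : a ^ m = 1 := by
      have : a ^ m • v = (1 : K) • v := by rw [← hv.pow_apply, hT, one_smul, End.one_apply]
      exact smul_left_injective K hv.2 this
    have hmem : a ∈ roots := Multiset.mem_dedup.mpr ((Polynomial.mem_nthRoots hm).mpr hroot)
    rw [Multiset.count_nsmul, Multiset.count_eq_one_of_mem (Multiset.nodup_dedup _) hmem, mul_one]
    calc T.charpoly.roots.count a ≤ T.charpoly.roots.card := Multiset.count_le_card _ _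
      _ ≤ T.charpoly.natDegree := Polynomial.card_roots' _
      _ = finrank K V := T.charpoly_natDegree
  · simp [Multiset.count_eq_zero_of_notMem ha]

theorem finite_setOf_smul_of_det_eq [Nontrivial V] {T : End K V} (hT : LinearMap.det T ≠ 0)
    (d : K) : {S | LinearMap.det S = d ∧ ∃ c : K, S = c • T}.Finite := by
  classical
  let scalars := (Polynomial.nthRoots (finrank K V) (d / LinearMap.det T)).toFinset
  refine (scalars.finite_toSet.image (· • T)).subset ?_
  rintro _ ⟨hdet, c, rfl⟩
  refine ⟨c, ?_, rfl⟩
  rw [LinearMap.det_smul] at hdet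
  simpa [scalars, Polynomial.mem_nthRoots finrank_pos] using eq_div_of_mul_eq hT hdet

theorem exists_smul_det_eq_one [IsAlgClosed K] [Nontrivial V] {T : End K V}
    (hT : LinearMap.det T ≠ 0) : ∃ c : K, c ≠ 0 ∧ LinearMap.det (c • T) = 1 := by
  obtain ⟨c, hc⟩ := IsAlgClosed.exists_pow_nat_eq (LinearMap.det T)⁻¹
    (finrank_pos (R := K) (M := V))
  refine ⟨c, fun hc0 ↦ ?_, by rw [LinearMap.det_smul, hc, inv_mul_cancel₀ hT]⟩
  rw [hc0, zero_pow finrank_pos.ne'] at hc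
  exact inv_ne_zero hT hc.symm

theorem pow_eq_one_of_det_eq_one {T : End K V} {m : ℕ} {c : K} (hdet : LinearMap.det T = 1)
    (hT : T ^ m = c • 1) : T ^ (m * finrank K V) = 1 := by
  have hc : c ^ finrank K V = 1 := by
    simpa [LinearMap.det_smul, hdet] using (congrArg LinearMap.det hT).symm
  rw [pow_mul, hT, smul_pow, hc, one_pow, one_smul]

theorem finite_range_iInf_eigenspace {ι : Type*} (f : ι → End K V)
    (hf : ∀ i j, Commute (f i) (f j)) :
    (Set.range fun χ : ι → K ↦ ⨅ i, (f i).eigenspace (χ i)).Finite := by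
  have hindep : iSupIndep fun χ : ι → K ↦ ⨅ i, (f i).eigenspace (χ i) :=
    (End.independent_iInf_maxGenEigenspace_of_forall_mapsTo f fun i j ↦
      End.mapsTo_maxGenEigenspace_of_comm (hf j i)).mono fun χ ↦
        iInf_mono fun _ ↦ End.eigenspace_le_maxGenEigenspace
  refine (((WellFoundedGT.finite_ne_bot_of_iSupIndep hindep).image
    fun χ : ι → K ↦ ⨅ i, (f i).eigenspace (χ i)).insert ⊥).subset ?_
  rintro _ ⟨χ, rfl⟩
  by_cases hχ : ⨅ i, (f i).eigenspace (χ i) = ⊥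
  · exact Or.inl hχ
  · exact Or.inr ⟨χ, hχ, rfl⟩

theorem exists_iInf_eigenspace_ne_bot [IsAlgClosed K] [Nontrivial V] {ι : Type*}
    (f : ι → End K V) (hf : ∀ i j, Commute (f i) (f j)) :
    ∃ χ : ι → K, ⨅ i, (f i).eigenspace (χ i) ≠ ⊥ := by
  let A := Algebra.adjoin K (Set.range f)
  have : IsMulCommutative A := Algebra.isMulCommutative_adjoin K <| by
    rintro _ ⟨i, rfl⟩ _ ⟨j, rfl⟩
    exact hf i j
  have : IsArtinian A V := isArtinian_of_tower K inferInstance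
  obtain ⟨S, hS⟩ := IsAtomic.exists_atom (Submodule A V)
  have : IsSimpleModule A S := isSimpleModule_iff_isAtom.mpr hS
  have : FiniteDimensional K S :=
    FiniteDimensional.finiteDimensional_submodule (S.restrictScalars K)
  have hdim : finrank K (S.restrictScalars K) = 1 :=
    IsSimpleModule.finrank_eq_one_of_isMulCommutative A S K
  obtain ⟨v, hv, hspan⟩ := finrank_eq_one_iff'.mp hdim
  have hfv (i : ι) : f i v ∈ S :=
    S.smul_mem (⟨f i, Algebra.subset_adjoin ⟨i, rfl⟩⟩ : A) v.2
  choose χ hχ using fun i ↦ hspan ⟨f i v, hfv i⟩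
  refine ⟨χ, (Submodule.ne_bot_iff _).mpr ⟨v, ?_, by simpa using hv⟩⟩
  simp only [Submodule.mem_iInf, End.mem_eigenspace_iff]
  exact fun i ↦ (congrArg Subtype.val (hχ i)).symm

end LinearAlgebra

section StronglyIrreducible

open Module

variable {K G V : Type*} [Field K] [Group G] [AddCommGroup V] [Module K V]

/-- A representation is strongly irreducible if its restriction to every subgroup of finite index
is irreducible. -/
def IsStronglyIrreducible (ρ : Representation K G V) : Prop :=
  ∀ H : Subgroup G, H.FiniteIndex → Representation.IsIrreducible (ρ.comp H.subtype)

/-- The subgroup of the elements which act as scalars in a representation. The scalar is allowed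
to be `0`, which happens only on the zero space. -/
def scalarSubgroup (ρ : Representation K G V) : Subgroup G where
  carrier := {g | ∃ c : K, ρ g = c • 1}
  one_mem' := ⟨1, by simp⟩
  mul_mem' := by
    rintro g h ⟨c, hc⟩ ⟨d, hd⟩
    exact ⟨d * c, by simp [hc, hd, mul_smul]⟩
  inv_mem' := by
    rintro g ⟨c, hc⟩
    have hg : c • ρ g⁻¹ = 1 := by
      rw [← map_one ρ, ← inv_mul_cancel g, map_mul, hc, mul_smul_comm, mul_one]
    refine ⟨c⁻¹, ?_⟩
    rcases eq_or_ne c 0 with rfl | hc0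
    · rw [← mul_one (ρ g⁻¹), ← hg, zero_smul, mul_zero, smul_zero]
    · rw [← hg, inv_smul_smul₀ hc0]

instance (ρ : Representation K G V) : (scalarSubgroup ρ).Normal where
  conj_mem := by
    rintro g ⟨c, hc⟩ h
    refine ⟨c, ?_⟩
    rw [map_mul, map_mul, hc, mul_smul_comm, mul_one, smul_mul_assoc, ← map_mul, mul_inv_cancel,
      map_one]

theorem map_eigenspace_conj (ρ : Representation K G V) (g b : G) (μ : K) :
    (End.eigenspace (ρ b) μ).map (ρ g) = End.eigenspace (ρ (g * b * g⁻¹)) μ := by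
  ext v
  simp only [Submodule.mem_map, End.mem_eigenspace_iff, map_mul, End.mul_apply]
  constructor
  · rintro ⟨w, hw, rfl⟩
    rw [ρ.inv_self_apply, hw, map_smul]
  · intro hv
    refine ⟨ρ g⁻¹ v, ?_, ρ.self_inv_apply g v⟩
    rw [← ρ.inv_self_apply g (ρ b _), hv, map_smul]

theorem det_map_ne_zero (ρ : Representation K G V) (g : G) : LinearMap.det (ρ g) ≠ 0 :=
  ((Group.isUnit g).map ρ).map LinearMap.det |>.ne_zero

theorem commute_of_map_conj_eq {ρ : Representation K G V} {a b s : G}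
    (h : ρ (a * s * a⁻¹) = ρ (b * s * b⁻¹)) : Commute (ρ (a⁻¹ * b)) (ρ s) :=
  calc ρ (a⁻¹ * b) * ρ s = ρ a⁻¹ * ρ (b * s * b⁻¹) * ρ b := by simp [← map_mul, mul_assoc]
    _ = ρ a⁻¹ * ρ (a * s * a⁻¹) * ρ b := by rw [h]
    _ = ρ s * ρ (a⁻¹ * b) := by simp [← map_mul, mul_assoc]

theorem det_map_conj (ρ : Representation K G V) (g b : G) :
    LinearMap.det (ρ (g * b * g⁻¹)) = LinearMap.det (ρ b) := by
  rw [map_mul, map_mul, map_mul, map_mul, mul_right_comm, ← map_mul, ← map_mul ρ,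
    mul_inv_cancel, map_one, map_one, one_mul]

open scoped commutatorElement in
theorem finite_range_map_conj [FiniteDimensional K V] [Nontrivial V] {ρ : Representation K G V}
    {B : Subgroup G} (hB : ⁅B, B⁆ ≤ scalarSubgroup ρ) {s : G} (hs : s ∈ B) :
    (Set.range fun b : B ↦ ρ (b * s * b⁻¹)).Finite := by
  refine (finite_setOf_smul_of_det_eq (det_map_ne_zero ρ s) (LinearMap.det (ρ s))).subset ?_
  rintro _ ⟨b, rfl⟩
  obtain ⟨c, hc⟩ := hB (Subgroup.commutator_mem_commutator b.2 hs)
  refine ⟨det_map_conj ρ _ _, c, ?_⟩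
  calc ρ (b * s * b⁻¹) = ρ ⁅(b : G), s⁆ * ρ s := by simp [← map_mul, commutatorElement_def]
    _ = c • ρ s := by rw [hc, smul_mul_assoc, one_mul]

namespace IsStronglyIrreducible

variable {ρ : Representation K G V}

theorem nontrivial (hρ : IsStronglyIrreducible ρ) : Nontrivial V := by
  have := hρ ⊤ inferInstance
  exact IsSimpleModule.nontrivial (MonoidAlgebra K (⊤ : Subgroup G))
    (Representation.asModule (ρ.comp (⊤ : Subgroup G).subtype))

open scoped Pointwise in
theorem eq_top_of_finite_range_map (hρ : IsStronglyIrreducible ρ) {W : Submodule K V}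
    (hW : W ≠ ⊥) (hfin : (Set.range fun g ↦ W.map (ρ g)).Finite) : W = ⊤ := by
  let _ : MulAction G (Submodule K V) := MulAction.compHom _ ρ
  have hH : (MulAction.stabilizer G W).FiniteIndex :=
    finiteIndex_of_finite_range (fun g ↦ g • W) hfin fun g g' h ↦ by
      rw [MulAction.mem_stabilizer_iff, mul_smul, ← h, inv_smul_smul]
  let σ : Subrepresentation (ρ.comp (MulAction.stabilizer G W).subtype) :=
    ⟨W, fun g v hv ↦ g.2.le (Submodule.mem_map_of_mem hv)⟩
  have := hρ _ hH
  have hσ : σ = ⊥ ∨ σ = ⊤ := eq_bot_or_eq_top σ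
  exact congrArg Subrepresentation.toSubmodule
    (hσ.resolve_left fun h ↦ hW (congrArg Subrepresentation.toSubmodule h))

variable [FiniteDimensional K V] [IsAlgClosed K]

theorem mem_scalarSubgroup_of_finite_conj (hρ : IsStronglyIrreducible ρ) {b : G}
    (hfin : (Set.range fun g ↦ ρ (g * b * g⁻¹)).Finite) : b ∈ scalarSubgroup ρ := by
  have := hρ.nontrivial
  obtain ⟨μ, hμ⟩ := End.exists_eigenvalue (ρ b)
  have htop : End.eigenspace (ρ b) μ = ⊤ := by
    refine hρ.eq_top_of_finite_range_map hμ ?_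
    simp only [map_eigenspace_conj]
    exact (hfin.image fun T : End K V ↦ T.eigenspace μ).subset
      (by rintro _ ⟨g, rfl⟩; exact ⟨_, ⟨g, rfl⟩, rfl⟩)
  refine ⟨μ, LinearMap.ext fun v ↦ ?_⟩
  have hv : v ∈ End.eigenspace (ρ b) μ := htop ▸ Submodule.mem_top
  exact End.mem_eigenspace_iff.mp hv

theorem le_scalarSubgroup_of_commute (hρ : IsStronglyIrreducible ρ) {A : Subgroup G} [A.Normal]
    (hA : ∀ a ∈ A, ∀ b ∈ A, Commute (ρ a) (ρ b)) : A ≤ scalarSubgroup ρ := by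
  have := hρ.nontrivial
  have hcomm : ∀ a b : A, Commute (ρ a) (ρ b) := fun a b ↦ hA a a.2 b b.2
  obtain ⟨χ, hχ⟩ := exists_iInf_eigenspace_ne_bot (fun a : A ↦ ρ a) hcomm
  have htop : ⨅ a : A, End.eigenspace (ρ a) (χ a) = ⊤ := by
    refine hρ.eq_top_of_finite_range_map hχ
      ((finite_range_iInf_eigenspace (fun a : A ↦ ρ a) hcomm).subset ?_)
    rintro _ ⟨g, rfl⟩
    refine ⟨fun a ↦ χ ((MulAut.conjNormal g).symm a), ?_⟩
    simp only [Submodule.map_iInf _ (ρ.apply_bijective g).injective, map_eigenspace_conj]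
    exact ((MulAut.conjNormal g).toEquiv.iInf_congr fun a ↦ by simp).symm
  rintro a ha
  refine ⟨χ ⟨a, ha⟩, LinearMap.ext fun v ↦ ?_⟩
  have hv : v ∈ ⨅ a : A, End.eigenspace (ρ a) (χ a) := htop ▸ Submodule.mem_top
  exact End.mem_eigenspace_iff.mp ((Submodule.mem_iInf _).mp hv ⟨a, ha⟩)

-- `B` acts by conjugation on a maximal linearly independent family `s` in `ρ B`. Each member has
-- finitely many conjugates, since they are scalar multiples of it with the same determinant, and an
-- element of `B` which fixes every member lies in `A`, the preimage of the centre of `ρ B`.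
theorem finiteIndex_scalarSubgroup_subgroupOf (hρ : IsStronglyIrreducible ρ) {B : Subgroup G}
    [B.Normal] (hB : ⁅B, B⁆ ≤ scalarSubgroup ρ) :
    ((scalarSubgroup ρ).subgroupOf B).FiniteIndex := by
  have := hρ.nontrivial
  let f := ρ.asGroupHom.rangeRestrict
  let A := B ⊓ (Subgroup.centralizer (B.map f : Set ρ.asGroupHom.range)).comap f
  have : (B.map f).Normal := Subgroup.Normal.map ‹_› f ρ.asGroupHom.rangeRestrict_surjective
  have : A.Normal := inferInstance
  have hA {a : G} : a ∈ A ↔ a ∈ B ∧ ∀ b ∈ B, Commute (ρ a) (ρ b) := by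
    refine and_congr_right fun _ ↦ Subgroup.mem_centralizer_iff.trans ?_
    rw [Subgroup.coe_map, Set.forall_mem_image]
    refine forall₂_congr fun b _ ↦ ?_
    rw [Subtype.ext_iff, Units.ext_iff]
    exact eq_comm
  obtain ⟨κ, s, -, hspan, hli⟩ := exists_linearIndependent' K fun b : B ↦ ρ b
  have : Finite κ := hli.finite
  refine finiteIndex_of_finite_range (fun (b : B) (i : κ) ↦ ρ (b * s i * b⁻¹))
    ((Set.Finite.pi' fun i ↦ finite_range_map_conj hB (s i).2).subset ?_) fun b b' h ↦ ?_
  · rintro _ ⟨b, rfl⟩ i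
    exact ⟨b, rfl⟩
  · refine hρ.le_scalarSubgroup_of_commute (fun a ha b hb ↦ (hA.mp ha).2 b (hA.mp hb).1)
      (hA.mpr ⟨(b⁻¹ * b').2, fun c hc ↦ ?_⟩)
    have hspan_c : ρ c ∈ Submodule.span K (Set.range ((fun b : B ↦ ρ b) ∘ s)) :=
      hspan ▸ Submodule.subset_span ⟨⟨c, hc⟩, rfl⟩
    generalize ρ c = R at hspan_c
    induction hspan_c using Submodule.span_induction with
    | mem _ hT =>
      obtain ⟨i, rfl⟩ := hT
      exact commute_of_map_conj_eq (congrFun h i)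
    | zero => exact Commute.zero_right _
    | add S T _ _ hS hT => exact hS.add_right hT
    | smul c T _ hT => exact hT.smul_right c

theorem le_scalarSubgroup_of_commutator_le (hρ : IsStronglyIrreducible ρ) {B : Subgroup G}
    [hn : B.Normal] (hB : ⁅B, B⁆ ≤ scalarSubgroup ρ) : B ≤ scalarSubgroup ρ := by
  have := hρ.nontrivial
  have := hρ.finiteIndex_scalarSubgroup_subgroupOf hB
  intro b hb
  refine hρ.mem_scalarSubgroup_of_finite_conj <|
    (Set.finite_iUnion fun q : B ⧸ (scalarSubgroup ρ).subgroupOf B ↦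
      finite_setOf_smul_of_det_eq (det_map_ne_zero ρ q.out) (LinearMap.det (ρ b))).subset ?_
  rintro _ ⟨g, rfl⟩
  let b' : B := ⟨g * b * g⁻¹, hn.conj_mem b hb g⟩
  let q : B ⧸ (scalarSubgroup ρ).subgroupOf B := b'
  have hq : q.out⁻¹ * b' ∈ (scalarSubgroup ρ).subgroupOf B := QuotientGroup.eq.mp q.out_eq'
  obtain ⟨c, hc⟩ := Subgroup.mem_subgroupOf.mp hq
  refine Set.mem_iUnion.mpr ⟨q, ?_, c, ?_⟩
  · exact det_map_conj ρ g b
  · calc ρ b' = ρ q.out * ρ (q.out⁻¹ * b' : B) := by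
          rw [← map_mul, ← B.coe_mul, mul_inv_cancel_left]
      _ = c • ρ q.out := by rw [hc, mul_smul_comm, mul_one]

theorem le_scalarSubgroup_of_isSolvable (hρ : IsStronglyIrreducible ρ) {N : Subgroup G} [N.Normal]
    [hN : Group.IsSolvable N] : N ≤ scalarSubgroup ρ := by
  obtain ⟨m, hm⟩ := hN.solvable
  suffices ∀ k ≤ m, (derivedSeries N k).map N.subtype ≤ scalarSubgroup ρ by
    simpa [← MonoidHom.range_eq_map] using this 0 (Nat.zero_le m)
  intro k hk
  induction hk using Nat.decreasingInduction with
  | self => simp [hm]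
  | of_succ k _ ih =>
    refine hρ.le_scalarSubgroup_of_commutator_le ?_
    rwa [← Subgroup.map_commutator, ← derivedSeries_succ]

end IsStronglyIrreducible

end StronglyIrreducible

section Irreducible

open Module MonoidAlgebra

variable {K G V : Type*} [Field K] [IsAlgClosed K] [Group G] [AddCommGroup V] [Module K V]
  [FiniteDimensional K V] {ρ : Representation K G V}

theorem asAlgebraHom_surjective_of_isIrreducible [ρ.IsIrreducible] :
    Function.Surjective ρ.asAlgebraHom := by
  intro T
  have hT (φ : End K[G] ρ.asModule) (v : ρ.asModule) :
      ρ.asModuleEquiv.symm (T (ρ.asModuleEquiv (φ v))) =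
        φ (ρ.asModuleEquiv.symm (T (ρ.asModuleEquiv v))) := by
    obtain ⟨c, rfl⟩ :=
      (IsSimpleModule.algebraMap_end_bijective_of_isAlgClosed (A := K[G]) (V := ρ.asModule) K).2 φ
    exact map_smul T c (ρ.asModuleEquiv v)
  let f : End (End K[G] ρ.asModule) ρ.asModule :=
    { toFun := fun v ↦ ρ.asModuleEquiv.symm (T (ρ.asModuleEquiv v))
      map_add' := fun v w ↦ map_add T v w
      map_smul' := hT }
  let b := finBasis K V
  obtain ⟨r, hr⟩ := jacobson_density f (Set.finite_range b).toFinset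
  exact ⟨r, b.ext fun i ↦ (hr (b i) ((Set.Finite.mem_toFinset _).mpr ⟨i, rfl⟩)).symm⟩

theorem span_range_eq_top_of_isIrreducible [ρ.IsIrreducible] :
    Submodule.span K (Set.range ρ) = ⊤ := by
  refine eq_top_iff.mpr fun T _ ↦ ?_
  obtain ⟨r, rfl⟩ := asAlgebraHom_surjective_of_isIrreducible (ρ := ρ) T
  rw [ρ.asAlgebraHom_def, MonoidAlgebra.lift_apply]
  exact Submodule.sum_mem _ fun g _ ↦ Submodule.smul_mem _ _ (Submodule.subset_span ⟨g, rfl⟩)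

theorem IsStronglyIrreducible.span_range_eq_top (hρ : IsStronglyIrreducible ρ) :
    Submodule.span K (Set.range ρ) = ⊤ := by
  have := hρ ⊤ inferInstance
  rw [← top_le_iff, ← span_range_eq_top_of_isIrreducible (ρ := ρ.comp (⊤ : Subgroup G).subtype)]
  exact Submodule.span_mono (Set.range_comp_subset_range _ ρ)

end Irreducible

section ScalarPowers

open Module

variable {K G V : Type*} [Field K] [Group G] [AddCommGroup V] [Module K V]
  {ρ : Representation K G V}

/-- The scalar multiples of determinant `1` of the operators of a representation. They represent
the image of the group in the projective linear group by operators of bounded order. -/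
def detOneMultiples (ρ : Representation K G V) : Submonoid (End K V) where
  carrier := {T | LinearMap.det T = 1 ∧ ∃ (c : K) (g : G), T = c • ρ g}
  one_mem' := ⟨map_one _, 1, 1, by simp⟩
  mul_mem' := by
    rintro _ _ ⟨hS, c, g, rfl⟩ ⟨hT, d, h, rfl⟩
    exact ⟨by rw [map_mul, hS, hT, one_mul], c * d, g * h, by rw [map_mul, smul_mul_smul_comm]⟩

variable [FiniteDimensional K V] [IsAlgClosed K]

theorem exists_smul_mem_detOneMultiples [Nontrivial V] (ρ : Representation K G V) (g : G) :
    ∃ c : K, c ≠ 0 ∧ c • ρ g ∈ detOneMultiples ρ := by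
  obtain ⟨c, hc, hdet⟩ := exists_smul_det_eq_one (det_map_ne_zero ρ g)
  exact ⟨c, hc, hdet, c, g, rfl⟩

theorem finite_detOneMultiples [Nontrivial V] (hspan : Submodule.span K (Set.range ρ) = ⊤) {ℓ : ℕ}
    (hℓ : 0 < ℓ) (hpow : ∀ g, g ^ ℓ ∈ scalarSubgroup ρ) :
    (detOneMultiples ρ : Set (End K V)).Finite := by
  refine finite_of_finite_trace ?_ ((finite_trace_of_pow_eq_one
    (m := ℓ * finrank K V) (Nat.mul_pos hℓ finrank_pos)).subset (Set.image_mono ?_))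
  · refine eq_top_iff.mpr (hspan ▸ Submodule.span_le.mpr ?_)
    rintro _ ⟨g, rfl⟩
    obtain ⟨c, hc, hmem⟩ := exists_smul_mem_detOneMultiples ρ g
    rw [← inv_smul_smul₀ hc (ρ g)]
    exact Submodule.smul_mem _ _ (Submodule.subset_span hmem)
  · rintro _ ⟨hdet, c, g, rfl⟩
    obtain ⟨d, hd⟩ := hpow g
    exact pow_eq_one_of_det_eq_one (c := c ^ ℓ * d) hdet
      (by rw [smul_pow, ← map_pow, hd, mul_smul])

theorem finiteIndex_scalarSubgroup_of_pow_mem [Nontrivial V]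
    (hspan : Submodule.span K (Set.range ρ) = ⊤) {ℓ : ℕ} (hℓ : 0 < ℓ)
    (hpow : ∀ g, g ^ ℓ ∈ scalarSubgroup ρ) : (scalarSubgroup ρ).FiniteIndex := by
  choose c hc hmem using exists_smul_mem_detOneMultiples ρ
  refine finiteIndex_of_finite_range (fun g ↦ c g • ρ g)
    ((finite_detOneMultiples hspan hℓ hpow).subset (Set.range_subset_iff.mpr hmem))
    fun g h hgh ↦ ⟨(c h)⁻¹ * c g, ?_⟩
  have hh : ρ h = ((c h)⁻¹ * c g) • ρ g := by rw [mul_smul, hgh, inv_smul_smul₀ (hc h)]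
  rw [map_mul, hh, mul_smul_comm, ← map_mul, inv_mul_cancel, map_one]

end ScalarPowers

section QuotientKer

open Module

variable {K G V : Type*} [Field K] [Group G] [AddCommGroup V] [Module K V]
  {ρ : Representation K G V}

theorem mem_ker_toRepresentation {σ : Subrepresentation ρ} {g : G} :
    g ∈ MonoidHom.ker σ.toRepresentation ↔ ∀ v ∈ σ.toSubmodule, ρ g v = v :=
  ⟨fun h v hv ↦ congrArg Subtype.val (LinearMap.congr_fun h ⟨v, hv⟩),
    fun h ↦ LinearMap.ext fun v ↦ Subtype.ext (h v v.2)⟩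

theorem mem_ker_quotient {W : Submodule K V} (hW : ∀ g, W ≤ W.comap (ρ g)) {g : G} :
    g ∈ MonoidHom.ker (ρ.quotient W hW) ↔ ∀ v, ρ g v - v ∈ W := by
  refine ⟨fun h v ↦ (Submodule.Quotient.eq W).mp (LinearMap.congr_fun h (W.mkQ v)), fun h ↦ ?_⟩
  exact Submodule.linearMap_qext W
    (LinearMap.ext fun v ↦ (Submodule.Quotient.eq W).mpr (h v))

theorem commute_of_sub_mem {W : Submodule K V} {S T : End K V} (hS : ∀ v ∈ W, S v = v)
    (hS' : ∀ v, S v - v ∈ W) (hT : ∀ v ∈ W, T v = v) (hT' : ∀ v, T v - v ∈ W) : Commute S T := by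
  refine LinearMap.ext fun v ↦ ?_
  have hST : S (T v) - S v = T v - v := by rw [← map_sub, hS _ (hT' v)]
  have hTS : T (S v) - T v = S v - v := by rw [← map_sub, hT _ (hS' v)]
  calc S (T v) = T v - v + S v := eq_add_of_sub_eq hST
    _ = S v - v + T v := by abel
    _ = T (S v) := (eq_add_of_sub_eq hTS).symm

namespace IsVirtuallySolvable

theorem quotient_ker_of_finiteIndex {M : Type*} [MulOneClass M] (f : G →* M) (H : Subgroup G)
    [H.FiniteIndex] (h : IsVirtuallySolvable (H ⧸ (f.comp H.subtype).ker)) :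
    IsVirtuallySolvable (G ⧸ f.ker) := by
  let φ : H ⧸ (f.comp H.subtype).ker →* G ⧸ f.ker :=
    QuotientGroup.map _ _ H.subtype (f.comap_ker H.subtype).ge
  have : (H.map (QuotientGroup.mk' f.ker)).FiniteIndex :=
    ⟨ne_zero_of_dvd_ne_zero Subgroup.FiniteIndex.index_ne_zero
      (H.index_map_dvd (QuotientGroup.mk'_surjective _))⟩
  have : φ.range.FiniteIndex := by
    refine Subgroup.finiteIndex_of_le (H := H.map (QuotientGroup.mk' f.ker)) ?_
    rintro _ ⟨g, hg, rfl⟩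
    exact ⟨(⟨g, hg⟩ : H), rfl⟩
  exact of_finiteIndex_range φ h

theorem quotient_ker_of_finiteIndex_scalarSubgroup [(scalarSubgroup ρ).FiniteIndex] :
    IsVirtuallySolvable (G ⧸ MonoidHom.ker ρ) := by
  refine quotient_ker_of_finiteIndex ρ (scalarSubgroup ρ) ?_
  have : Group.IsSolvable (scalarSubgroup ρ ⧸ (ρ.comp (scalarSubgroup ρ).subtype).ker) := by
    refine Group.isSolvable_of_comm fun x y ↦ ?_
    induction x using QuotientGroup.induction_on with | _ x
    induction y using QuotientGroup.induction_on with | _ y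
    obtain ⟨c, hc⟩ := x.2
    rw [← QuotientGroup.mk_mul, ← QuotientGroup.mk_mul, quotient_ker_mk_eq_iff]
    simp [hc]
  exact of_isSolvable

theorem quotient_ker_of_subrepresentation (σ : Subrepresentation ρ)
    (hσ : IsVirtuallySolvable (G ⧸ MonoidHom.ker σ.toRepresentation))
    (hσ' : IsVirtuallySolvable
      (G ⧸ MonoidHom.ker (ρ.quotient σ.toSubmodule σ.apply_mem_toSubmodule))) :
    IsVirtuallySolvable (G ⧸ MonoidHom.ker ρ) := by
  let ψ := (QuotientGroup.mk' (MonoidHom.ker σ.toRepresentation)).prod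
    (QuotientGroup.mk' (MonoidHom.ker (ρ.quotient σ.toSubmodule σ.apply_mem_toSubmodule)))
  have hψ {g : G} : ψ g = 1 ↔
      (∀ v ∈ σ.toSubmodule, ρ g v = v) ∧ ∀ v, ρ g v - v ∈ σ.toSubmodule := by
    rw [← mem_ker_toRepresentation, ← mem_ker_quotient σ.apply_mem_toSubmodule, Prod.ext_iff]
    exact and_congr (QuotientGroup.eq_one_iff g) (QuotientGroup.eq_one_iff g)
  let φ := QuotientGroup.lift (MonoidHom.ker ρ) ψ fun g hg ↦ hψ.mpr <| by
    simp [MonoidHom.mem_ker.mp hg]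
  have : Group.IsSolvable φ.ker := by
    refine Group.isSolvable_of_comm fun ⟨x, hx⟩ ⟨y, hy⟩ ↦ Subtype.ext ?_
    induction x using QuotientGroup.induction_on with | _ x
    induction y using QuotientGroup.induction_on with | _ y
    obtain ⟨hx, hx'⟩ := hψ.mp hx
    obtain ⟨hy, hy'⟩ := hψ.mp hy
    refine (quotient_ker_mk_eq_iff ρ).mpr ?_
    rw [map_mul, map_mul]
    exact commute_of_sub_mem hx hx' hy hy'
  exact of_isSolvable_ker φ (hσ.prod hσ')

end IsVirtuallySolvable

end QuotientKer

section PowersInSolvable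

open Module

theorem exists_subrepresentation_of_not_isIrreducible {K G V : Type*} [Field K] [Group G]
    [AddCommGroup V] [Module K V] [Nontrivial V] {ρ : Representation K G V}
    (h : ¬ρ.IsIrreducible) : ∃ σ : Subrepresentation ρ, σ.toSubmodule ≠ ⊥ ∧ σ.toSubmodule ≠ ⊤ := by
  by_contra! hσ
  have : Nontrivial (Subrepresentation ρ) :=
    ⟨⊥, ⊤, fun hbt ↦ bot_ne_top (α := Submodule K V)
      (congrArg Subrepresentation.toSubmodule hbt)⟩
  exact h ⟨fun σ ↦ (em _).imp (fun hbot ↦ Subrepresentation.ext hbot)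
    fun hbot ↦ Subrepresentation.ext (hσ σ hbot)⟩

theorem IsStronglyIrreducible.isVirtuallySolvable_quotient_ker {K G V : Type*} [Field K]
    [IsAlgClosed K] [Group G] [AddCommGroup V] [Module K V] [FiniteDimensional K V]
    {ρ : Representation K G V} (hρ : IsStronglyIrreducible ρ) (N : Subgroup G) [N.Normal]
    [Group.IsSolvable N] {ℓ : ℕ} (hℓ : 0 < ℓ) (hN : ∀ g : G, g ^ ℓ ∈ N) :
    IsVirtuallySolvable (G ⧸ MonoidHom.ker ρ) := by
  have := hρ.nontrivial
  have := finiteIndex_scalarSubgroup_of_pow_mem hρ.span_range_eq_top hℓ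
    fun g ↦ hρ.le_scalarSubgroup_of_isSolvable (hN g)
  exact .quotient_ker_of_finiteIndex_scalarSubgroup

theorem isVirtuallySolvable_quotient_ker_of_pow_mem {K : Type*} [Field K] [IsAlgClosed K] {ℓ : ℕ}
    (hℓ : 0 < ℓ) {G V : Type*} [Group G] [AddCommGroup V] [Module K V] [FiniteDimensional K V]
    (ρ : Representation K G V) (N : Subgroup G) [N.Normal] [Group.IsSolvable N]
    (hN : ∀ g : G, g ^ ℓ ∈ N) : IsVirtuallySolvable (G ⧸ MonoidHom.ker ρ) := by
  induction hd : finrank K V using Nat.strong_induction_on generalizing G V with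
  | _ d ih =>
    subst hd
    cases subsingleton_or_nontrivial V with
    | inl _ =>
      have htop : scalarSubgroup ρ = ⊤ := eq_top_iff.mpr fun _ _ ↦ ⟨1, Subsingleton.elim _ _⟩
      have : (scalarSubgroup ρ).FiniteIndex := htop ▸ inferInstance
      exact .quotient_ker_of_finiteIndex_scalarSubgroup
    | inr _ =>
    by_cases hρ : IsStronglyIrreducible ρ
    · exact hρ.isVirtuallySolvable_quotient_ker N hℓ hN
    obtain ⟨H, hH, hirr⟩ : ∃ H : Subgroup G, H.FiniteIndex ∧
        ¬Representation.IsIrreducible (ρ.comp H.subtype) := by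
      simpa [IsStronglyIrreducible] using hρ
    obtain ⟨σ, hbot, htop⟩ := exists_subrepresentation_of_not_isIrreducible hirr
    have := isSolvable_subgroupOf N H
    have hlt : finrank K (V ⧸ σ.toSubmodule) < finrank K V := by
      have := σ.toSubmodule.finrank_quotient_add_finrank
      have := Submodule.one_le_finrank_iff.mpr hbot
      omega
    have hNH (h : H) : h ^ ℓ ∈ N.subgroupOf H := hN h
    refine .quotient_ker_of_finiteIndex ρ H (.quotient_ker_of_subrepresentation σ
      (ih _ (Submodule.finrank_lt htop) _ (N.subgroupOf H) hNH rfl)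
      (ih _ hlt _ (N.subgroupOf H) hNH rfl))

theorem isVirtuallySolvable_of_injective_of_pow_mem {K G V : Type*} [Field K] [IsAlgClosed K]
    [Group G] [AddCommGroup V] [Module K V] [FiniteDimensional K V] {ρ : Representation K G V}
    (hρ : Function.Injective ρ) {ℓ : ℕ} (hℓ : 0 < ℓ) (N : Subgroup G) [N.Normal]
    [Group.IsSolvable N] (hN : ∀ g : G, g ^ ℓ ∈ N) : IsVirtuallySolvable G := by
  have hker : MonoidHom.ker ρ = ⊥ := (MonoidHom.ker_eq_bot_iff ρ).mpr hρ
  have : Group.IsSolvable (QuotientGroup.mk' (MonoidHom.ker ρ)).ker := by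
    rw [QuotientGroup.ker_mk', hker]
    infer_instance
  exact .of_isSolvable_ker (QuotientGroup.mk' (MonoidHom.ker ρ))
    (isVirtuallySolvable_quotient_ker_of_pow_mem hℓ ρ N hN)

end PowersInSolvable

section GeneralLinearGroups

/-- The standard representation of `GL ι K`, with scalars extended to a field `L` over `K`. -/
noncomputable def standardRepresentation (ι K L : Type*) [Fintype ι] [DecidableEq ι] [Field K]
    [Field L] [Algebra K L] : Representation L (GL ι K) (ι → L) :=
  (Units.coeHom _).comp
    ((GeneralLinearGroup.toLin (n := ι) (R := L)).toMonoidHom.comp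
      (GeneralLinearGroup.map (algebraMap K L)))

theorem standardRepresentation_injective {ι K L : Type*} [Fintype ι] [DecidableEq ι] [Field K]
    [Field L] [Algebra K L] : Function.Injective (standardRepresentation ι K L) :=
  Units.val_injective.comp <| GeneralLinearGroup.toLin.injective.comp <|
    Units.map_injective (map_injective (algebraMap K L).injective)

theorem stmt_5_general {K ι : Type*} [Field K] [Fintype ι] [DecidableEq ι]
    (Γ : Subgroup (GL ι K)) {ℓ : ℕ} (hℓ : 0 < ℓ)
    (hsolv : Group.IsSolvable ↥(Subgroup.closure {y : GL ι K | ∃ x ∈ Γ, y = x ^ ℓ})) :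
    IsVirtuallySolvable ↥Γ := by
  let ρ : Representation (AlgebraicClosure K) Γ (ι → AlgebraicClosure K) :=
    (standardRepresentation ι K (AlgebraicClosure K)).comp Γ.subtype
  have hρ : Function.Injective ρ := standardRepresentation_injective.comp Subtype.val_injective
  let N := (Subgroup.closure {y : GL ι K | ∃ x ∈ Γ, y = x ^ ℓ}).subgroupOf Γ
  have : N.Normal := normal_subgroupOf_closure_pow Γ ℓ
  have : Group.IsSolvable N := isSolvable_subgroupOf _ Γ
  exact isVirtuallySolvable_of_injective_of_pow_mem hρ hℓ N
    fun g ↦ Subgroup.subset_closure ⟨g, g.2, rfl⟩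

end GeneralLinearGroups

/-- If, for some positive integer `ℓ`, the subgroup generated by the `ℓ`-th powers of elements
of a linear group `Γ` over a field of characteristic zero is solvable, then `Γ` is virtually
solvable. -/
theorem stmt_5 {K : Type*} [Field K] [CharZero K] {n : ℕ} (hn : 1 ≤ n)
    (Γ : Subgroup (GL (Fin n) K)) (ℓ : ℕ) (hℓ : 0 < ℓ)
    (hsolv : IsSolvable ↥(Subgroup.closure {y : GL (Fin n) K | ∃ x ∈ Γ, y = x ^ ℓ})) :
    IsVirtuallySolvable ↥Γ :=
  stmt_5_general Γ hℓ hsolv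
end

section
/- Fix n ≥ 1. Assume that for every number field F and every subgroup Δ of GL_n(F) admitting elements δ₁, …, δ_r ∈ Δ with Δ = ⟨δ₁⟩⋯⟨δ_r⟩ (every element of Δ is a product δ₁^{k₁}⋯δ_r^{k_r} with integers k_i) in which at most one of the δ_i is not semi-simple, the group Δ is virtually solvable. Then for every field K of characteristic zero, every subgroup Γ of GL_n(K) admitting elements γ₁, …, γ_r ∈ Γ with Γ = ⟨γ₁⟩⋯⟨γ_r⟩ in which at most one of the γ_i is not semi-simple is virtually solvable. -/
open Matrix

/-- An element of `GL n K` is semi-simple if the corresponding linear endomorphism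
of `K^n` is a semisimple endomorphism. -/
def IsSemisimpleElt {n : ℕ} {K : Type*} [Field K] (g : GL (Fin n) K) : Prop :=
  Module.End.IsSemisimple ((g : Matrix (Fin n) (Fin n) K).mulVecLin)

universe u

open Polynomial Module
open scoped commutatorElement

/-!
Spread `Γ` out over a finitely generated `ℚ`-algebra `R ⊆ K`, replacing semisimplicity by the
existence of a separable annihilating polynomial, which survives every ring homomorphism out of `R`.
By Noether normalization the homomorphisms from `R` to number fields of degree at most some fixed
`D` separate the points of `R`. The images of `Γ` in `GL_n(F)` are virtually solvable, and what is
needed is a bound that is uniform in `F`. For `N = (2Dn²)!` the `N`-th power of any element of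
`GL_n(F)` is neat: the only quotient of two of its eigenvalues that is a root of unity is `1`. A
virtually solvable linear group generated by neat elements acts on every irreducible subquotient
through an abelian group, so its derived series dies after `n` steps. Hence the `n`-th derived
subgroup of `⟨g ^ N | g ∈ Γ⟩` is trivial in every specialization, thus trivial, and bounded
generation makes the subgroup generated by the `N`-th powers of finite index.
-/

theorem isUnit_of_isUnit_subalgebra_val {L A : Type*} [Field L] [Ring A] [Algebra L A]
    [Algebra.IsIntegral L A] {B : Subalgebra L A} {b : B} (hb : IsUnit (b : A)) : IsUnit b := by
  have : Algebra.IsIntegral L B := .of_injective B.val Subtype.val_injective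
  exact IsArtinianRing.isUnit_of_nonZeroDivisor_of_isIntegral' (R := L) <|
    comap_nonZeroDivisors_le_of_injective (f := B.val) Subtype.val_injective hb.mem_nonZeroDivisors

/-- An element `t` of an `L`-algebra is *neat* if it is a polynomial in each of its positive
powers. For an invertible matrix over an algebraically closed field of characteristic zero this
holds as soon as no quotient of two distinct eigenvalues is a root of unity. -/
def IsNeat (L : Type*) {A : Type*} [CommSemiring L] [Semiring A] [Algebra L A] (t : A) : Prop :=
  ∀ k : ℕ, 0 < k → t ∈ Algebra.adjoin L {t ^ k}

namespace IsNeat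

variable {L A B : Type*} [CommSemiring L] [Semiring A] [Semiring B] [Algebra L A] [Algebra L B]

theorem map {t : A} (ht : IsNeat L t) (f : A →ₐ[L] B) : IsNeat L (f t) := fun k hk => by
  rw [← map_pow, ← Set.image_singleton, ← AlgHom.map_adjoin]
  exact Subalgebra.mem_map.2 ⟨t, ht k hk, rfl⟩

theorem mem_of_pow_mem {t : A} (ht : IsNeat L t) (S : Subalgebra L A) {k : ℕ} (hk : 0 < k)
    (h : t ^ k ∈ S) : t ∈ S :=
  Algebra.adjoin_le (Set.singleton_subset_iff.2 h) (ht k hk)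

theorem of_injective {f : A →ₐ[L] B} (hf : Function.Injective f) {t : A} (ht : IsNeat L (f t)) :
    IsNeat L t := fun k hk => by
  have := ht k hk
  rw [← map_pow, ← Set.image_singleton, ← AlgHom.map_adjoin] at this
  exact (hf.mem_set_image).1 this

end IsNeat

section NeatnessCriterion

theorem isNilpotent_aeval_of_eval_eq_zero {L A : Type*} [Field L] [IsAlgClosed L] [Ring A]
    [Algebra L A] {t : A} (ht : IsIntegral L t) (p : L[X])
    (hp : ∀ a, (minpoly L t).IsRoot a → p.eval a = 0) : IsNilpotent (aeval t p) := by
  have hdvd : minpoly L t ∣ p ^ (minpoly L t).roots.card := by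
    nth_rw 1 [(IsAlgClosed.splits (minpoly L t)).eq_prod_roots_of_monic (minpoly.monic ht)]
    rw [← Multiset.prod_replicate, ← Multiset.map_const']
    exact Multiset.prod_dvd_prod_of_dvd _ _ fun a ha =>
      dvd_iff_isRoot.2 (hp a (isRoot_of_mem_roots ha))
  exact ⟨_, by rw [← map_pow, minpoly.dvd_iff.1 hdvd]⟩

-- By the uniqueness in Hensel's lemma, the root of `X ^ k - b` obtained from `x` in `B` is `t`.
theorem mem_range_algebraMap_of_pow_eq {B A : Type*} [CommRing B] [CommRing A] [Algebra B A]
    [FaithfulSMul B A] {k : ℕ} (hk : 0 < k) (hkB : IsUnit (k : B)) {b x : B} {t : A}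
    (hb : IsUnit b) (htb : t ^ k = algebraMap B A b)
    (htx : IsNilpotent (algebraMap B A x - t)) : t ∈ Set.range (algebraMap B A) := by
  have hxb : IsNilpotent (x ^ k - b) := by
    rw [← IsNilpotent.map_iff (FaithfulSMul.algebraMap_injective B A), map_sub, map_pow, ← htb]
    obtain ⟨c, hc⟩ := sub_dvd_pow_sub_pow (algebraMap B A x) t k
    exact hc ▸ (Commute.all _ c).isNilpotent_mul_right htx
  have hx : IsUnit x := by
    refine (isUnit_pow_iff hk.ne').1 ?_
    simpa using hxb.isUnit_add_left_of_commute hb (Commute.all _ _)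
  have hP : IsNilpotent (aeval x (X ^ k - C b)) := by simpa using hxb
  have hP' : IsUnit (aeval x (derivative (X ^ k - C b))) := by
    simpa [derivative_X_pow] using ⟨hkB, hx.pow (k - 1)⟩
  obtain ⟨y, ⟨hxy, hy⟩, -⟩ := existsUnique_nilpotent_sub_and_aeval_eq_zero hP hP'
  refine ⟨y, (existsUnique_nilpotent_sub_and_aeval_eq_zero (x := algebraMap B A x)
    (P := X ^ k - C b) ?_ ?_).unique ⟨?_, ?_⟩ ⟨htx, by simp [htb]⟩⟩
  · rw [aeval_algebraMap_apply]
    exact hP.map _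
  · rw [aeval_algebraMap_apply]
    exact hP'.map _
  · rw [← map_sub]
    exact hxy.map _
  · rw [aeval_algebraMap_apply, hy, map_zero]

theorem exists_isNilpotent_aeval_pow_sub {L A : Type*} [Field L] [IsAlgClosed L] [Ring A]
    [Algebra L A] {t : A} (ht : IsIntegral L t) {k : ℕ}
    (hk : {a | (minpoly L t).IsRoot a}.InjOn (· ^ k)) :
    ∃ p : L[X], IsNilpotent (aeval (t ^ k) p - t) := by
  classical
  let p := Lagrange.interpolate (minpoly L t).roots.toFinset (· ^ k) id
  have hroots (a : L) : a ∈ (minpoly L t).roots.toFinset ↔ (minpoly L t).IsRoot a := by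
    simp [minpoly.ne_zero ht]
  have hp (a : L) (ha : (minpoly L t).IsRoot a) : p.eval (a ^ k) = a :=
    Lagrange.eval_interpolate_at_node id (fun a ha b hb => hk ((hroots a).1 ha) ((hroots b).1 hb))
      ((hroots a).2 ha)
  refine ⟨p, ?_⟩
  have := isNilpotent_aeval_of_eval_eq_zero ht (p.comp (X ^ k) - X)
    fun a ha => by simp [hp a ha]
  rwa [map_sub, aeval_comp, aeval_X_pow, aeval_X] at this

theorem isNeat_of_injOn_pow_commRing {L A : Type*} [Field L] [IsAlgClosed L] [CharZero L]
    [CommRing A] [Algebra L A] [Algebra.IsIntegral L A] {t : A} (ht : IsUnit t)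
    (h : ∀ k, 0 < k → {a | (minpoly L t).IsRoot a}.InjOn (· ^ k)) : IsNeat L t := fun k hk => by
  obtain ⟨p, hp⟩ := exists_isNilpotent_aeval_pow_sub (Algebra.IsIntegral.isIntegral t) (h k hk)
  let B := Algebra.adjoin L {t ^ k}
  let b : B := ⟨t ^ k, Algebra.self_mem_adjoin_singleton L _⟩
  have hkB : IsUnit (k : B) := by
    simpa using (Nat.cast_ne_zero.2 hk.ne' : (k : L) ≠ 0).isUnit.map (algebraMap L B)
  have htB := mem_range_algebraMap_of_pow_eq (b := b) (x := aeval b p) (t := t) hk hkB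
    (isUnit_of_isUnit_subalgebra_val (ht.pow k)) rfl
    (by rwa [← aeval_algebraMap_apply])
  rwa [Subalgebra.setRange_algebraMap] at htB

theorem isNeat_of_injOn_pow {L A : Type*} [Field L] [IsAlgClosed L] [CharZero L] [Ring A]
    [Algebra L A] [Algebra.IsIntegral L A] {t : A} (ht : IsUnit t)
    (h : ∀ k, 0 < k → {a | (minpoly L t).IsRoot a}.InjOn (· ^ k)) : IsNeat L t := by
  let T := Algebra.adjoin L {t}
  let τ : T := ⟨t, Algebra.self_mem_adjoin_singleton L t⟩
  have : Algebra.IsIntegral L T := .of_injective T.val Subtype.val_injective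
  have hτ : IsUnit τ := isUnit_of_isUnit_subalgebra_val ht
  rw [show minpoly L t = minpoly L τ from minpoly.algHom_eq T.val Subtype.val_injective τ] at h
  exact (isNeat_of_injOn_pow_commRing hτ h).map T.val

end NeatnessCriterion

section Invariant

variable {L V : Type*} [CommRing L] [AddCommGroup V] [Module L V]

/-- The algebra of endomorphisms of `V` mapping the submodule `W` into itself. -/
def invtSubalgebra (W : Submodule L V) : Subalgebra L (End L V) where
  carrier := {f | W ≤ W.comap f}
  mul_mem' hf hg _ hw := hf (hg hw)
  add_mem' hf hg _ hw := W.add_mem (hf hw) (hg hw)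
  algebraMap_mem' c _ hw := W.smul_mem c hw

variable {W : Submodule L V} {T : End L V}

theorem mem_invtSubalgebra : T ∈ invtSubalgebra W ↔ W ≤ W.comap T := Iff.rfl

theorem IsNeat.restrict (hT : IsNeat L T) (h : W ≤ W.comap T) : IsNeat L (T.restrict h) :=
  let restrict : invtSubalgebra W →ₐ[L] End L W :=
    { toFun f := f.1.restrict (mem_invtSubalgebra.1 f.2)
      map_one' := rfl
      map_mul' _ _ := rfl
      map_zero' := rfl
      map_add' _ _ := rfl
      commutes' _ := rfl }
  (of_injective (f := (invtSubalgebra W).val) (t := ⟨T, mem_invtSubalgebra.2 h⟩)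
    Subtype.val_injective hT).map restrict

theorem IsNeat.mapQ (hT : IsNeat L T) (h : W ≤ W.comap T) : IsNeat L (W.mapQ W T h) :=
  let mapQ : invtSubalgebra W →ₐ[L] End L (V ⧸ W) :=
    { toFun f := W.mapQ W f.1 (mem_invtSubalgebra.1 f.2)
      map_one' := W.mapQ_id
      map_mul' _ _ := by ext; rfl
      map_zero' := W.mapQ_zero _
      map_add' _ _ := by ext; rfl
      commutes' _ := by ext; rfl }
  (of_injective (f := (invtSubalgebra W).val) (t := ⟨T, mem_invtSubalgebra.2 h⟩)
    Subtype.val_injective hT).map mapQ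

end Invariant

theorem map_mem_of_closure_eq_top {L A G : Type*} [Field L] [Ring A] [Algebra L A]
    [Algebra.IsIntegral L A] [Group G] (ρ : G →* A) (S : Subalgebra L A) {X : Set G}
    (hX : Subgroup.closure X = ⊤) (h : ∀ x ∈ X, ρ x ∈ S) (g : G) : ρ g ∈ S := by
  induction (hX ▸ Subgroup.mem_top g : g ∈ Subgroup.closure X) using
    Subgroup.closure_induction with
  | mem x hx => exact h x hx
  | one => exact map_one ρ ▸ S.one_mem
  | mul x y _ _ hx hy => exact map_mul ρ x y ▸ S.mul_mem hx hy
  | inv x _ hx =>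
    obtain ⟨y, hy⟩ := (isUnit_of_isUnit_subalgebra_val (b := (⟨ρ x, hx⟩ : S))
      ((Group.isUnit x).map ρ)).exists_right_inv
    have hinv : ρ x⁻¹ * ρ x = 1 := by rw [← map_mul, inv_mul_cancel, map_one]
    rw [left_inv_eq_right_inv hinv (congrArg Subtype.val hy)]
    exact y.2

section Weight

variable {L V G : Type*} [Field L] [AddCommGroup V] [Module L V] [Group G]

theorem exists_forall_apply_eq_smul [IsAlgClosed L] [FiniteDimensional L V] [Nontrivial V]
    {ι : Type*} {f : ι → End L V} (hf : ∀ i j, Commute (f i) (f j)) :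
    ∃ v ≠ 0, ∃ χ : ι → L, ∀ i, f i v = χ i • v := by
  let C := Algebra.adjoin L (Set.range f)
  have : IsMulCommutative C := Algebra.isMulCommutative_adjoin L <| by
    rintro _ ⟨i, rfl⟩ _ ⟨j, rfl⟩
    exact hf i j
  have : IsArtinian C V := isArtinian_of_tower L inferInstance
  obtain ⟨S, hS⟩ := IsAtomic.exists_atom (Submodule C V)
  have : IsSimpleModule C S := isSimpleModule_iff_isAtom.2 hS
  have : FiniteDimensional L S := inferInstanceAs (FiniteDimensional L (S.restrictScalars L))
  have hrank : finrank L (S.restrictScalars L) = 1 :=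
    IsSimpleModule.finrank_eq_one_of_isMulCommutative C S L
  obtain ⟨v, hv, h⟩ := finrank_eq_one_iff'.1 hrank
  choose χ hχ using fun i => h ((⟨f i, Algebra.subset_adjoin ⟨i, rfl⟩⟩ : C) • (v : S))
  exact ⟨v, by simpa using hv, χ, fun i => (congrArg Subtype.val (hχ i)).symm⟩

/-- The simultaneous eigenspace of the elements of the subgroup `A` with eigenvalues `χ`. -/
def weightSpace (ρ : Representation L G V) (A : Subgroup G) (χ : A → L) : Submodule L V :=
  ⨅ a : A, End.eigenspace (ρ a) (χ a)

variable {ρ : Representation L G V} {A : Subgroup G}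

theorem mem_weightSpace {χ : A → L} {v : V} :
    v ∈ weightSpace ρ A χ ↔ ∀ a : A, ρ a v = χ a • v := by
  simp [weightSpace]

theorem finite_weightSpace_ne_bot [FiniteDimensional L V]
    (hA : ∀ a b : A, Commute (ρ a) (ρ b)) : {χ | weightSpace ρ A χ ≠ ⊥}.Finite := by
  have hind : iSupIndep (weightSpace ρ A) :=
    (End.independent_iInf_maxGenEigenspace_of_forall_mapsTo (fun a : A => ρ a)
      fun a b φ => End.mapsTo_maxGenEigenspace_of_comm (hA b a) φ).mono
        fun χ => iInf_mono fun a => End.eigenspace_le_maxGenEigenspace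
  exact WellFoundedGT.finite_ne_bot_of_iSupIndep hind

theorem map_mem_weightSpace [A.Normal] {χ : A → L} {v : V} (hv : v ∈ weightSpace ρ A χ) (x : G) :
    ρ x v ∈ weightSpace ρ A (χ ∘ MulAut.conjNormal x⁻¹) := by
  rw [mem_weightSpace] at hv ⊢
  intro a
  have := congrArg (ρ x) (hv (MulAut.conjNormal x⁻¹ a))
  rw [map_smul, ← Module.End.mul_apply, ← map_mul] at this
  rw [← Module.End.mul_apply, ← map_mul]
  simpa [mul_assoc] using this

theorem exists_weightSpace_le_comap_pow [FiniteDimensional L V] [A.Normal]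
    (hA : ∀ a b : A, Commute (ρ a) (ρ b)) (χ : A → L) (x : G) :
    ∃ k, 0 < k ∧ weightSpace ρ A χ ≤ (weightSpace ρ A χ).comap (ρ x ^ k) := by
  obtain hχ | hχ := eq_or_ne (weightSpace ρ A χ) ⊥
  · exact ⟨1, one_pos, by simp [hχ]⟩
  let σ : (A → L) → (A → L) := fun χ => χ ∘ MulAut.conjNormal x⁻¹
  have hσ : Set.MapsTo σ {χ | weightSpace ρ A χ ≠ ⊥} {χ | weightSpace ρ A χ ≠ ⊥} := by
    intro χ hχ
    obtain ⟨v, hv, hv0⟩ := Submodule.exists_mem_ne_zero_of_ne_bot hχ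
    refine (Submodule.ne_bot_iff _).2 ⟨ρ x v, map_mem_weightSpace hv x, ?_⟩
    simpa using (ρ.apply_bijective x).1.ne hv0
  have hσinj : Function.Injective σ := (MulAut.conjNormal x⁻¹).surjective.injective_comp_right
  have hpow (k : ℕ) (v : V) (hv : v ∈ weightSpace ρ A χ) :
      (ρ x ^ k) v ∈ weightSpace ρ A (σ^[k] χ) := by
    induction k with
    | zero => simpa using hv
    | succ k ih =>
      rw [pow_succ', Function.iterate_succ_apply']
      exact map_mem_weightSpace ih x
  have := (finite_weightSpace_ne_bot hA).to_subtype
  obtain ⟨k, hk, hperiod⟩ := Function.mem_periodicPts.1 <|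
    ((hσ.restrict_inj).2 hσinj.injOn).mem_periodicPts ⟨χ, hχ⟩
  have hσk : σ^[k] χ = χ := by
    simpa [hσ.iterate_restrict k] using congrArg Subtype.val hperiod.eq
  exact ⟨k, hk, fun v hv => hσk ▸ hpow k v hv⟩

end Weight

theorem commute_pow_of_commutatorElement_pow_eq_one {G : Type*} [Group G] {x a : G} {d : ℕ}
    (h : Commute ⁅x, a⁆ x) (hd : ⁅x, a⁆ ^ d = 1) : Commute (x ^ d) a := by
  have hconj : a * x * a⁻¹ = ⁅x, a⁆⁻¹ * x := by simp [commutatorElement_def, mul_assoc]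
  have hpow : a * x ^ d * a⁻¹ = x ^ d := by
    rw [← conj_pow, hconj, h.inv_left.mul_pow, inv_pow, hd, inv_one, one_mul]
  exact (mul_inv_eq_iff_eq_mul.1 hpow).symm

section Irreducible

variable {L V G : Type*} [Field L] [AddCommGroup V] [Module L V] [Group G]
  {ρ : Representation L G V} {A : Subgroup G} {X : Set G}

theorem commute_of_commute_pow (hρ : Function.Injective ρ) {x a : G} (hx : IsNeat L (ρ x)) {k : ℕ}
    (hk : 0 < k) (h : Commute (x ^ k) a) : Commute x a := by
  have hmem : ρ x ∈ Subalgebra.centralizer L {ρ a} :=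
    hx.mem_of_pow_mem _ hk <| (Subalgebra.mem_centralizer_iff L).2 <| by
      simpa using (h.map ρ).symm.eq
  exact .of_map hρ ((Subalgebra.mem_centralizer_iff L).1 hmem (ρ a) rfl).symm

theorem mem_center_of_map_eq_algebraMap (hρ : Function.Injective ρ) {a : G} {c : L}
    (h : ρ a = algebraMap L _ c) : a ∈ Subgroup.center G :=
  Subgroup.mem_center_iff.2 fun g => hρ <| by
    rw [map_mul, map_mul, h, Algebra.commutes]

theorem isIrreducible_iff_forall_eq_bot_or_eq_top : ρ.IsIrreducible ↔
    Nontrivial V ∧ ∀ W : Submodule L V, (∀ g, W ≤ W.comap (ρ g)) → W = ⊥ ∨ W = ⊤ := by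
  refine ⟨fun _ => ⟨not_subsingleton_iff_nontrivial.1 fun _ =>
    not_subsingleton (Subrepresentation ρ) Subrepresentation.toSubmodule_injective.subsingleton,
    fun W hW => ?_⟩, fun ⟨_, h⟩ => ?_⟩
  · exact (eq_bot_or_eq_top (⟨W, hW⟩ : Subrepresentation ρ)).imp
      (congrArg Subrepresentation.toSubmodule) (congrArg Subrepresentation.toSubmodule)
  · have : Nontrivial (Subrepresentation ρ) :=
      ⟨⊥, ⊤, fun h => bot_ne_top (congrArg Subrepresentation.toSubmodule h)⟩
    exact ⟨fun S => (h S.toSubmodule S.apply_mem_toSubmodule).imp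
      (fun h => Subrepresentation.toSubmodule_injective h)
      (fun h => Subrepresentation.toSubmodule_injective h)⟩

theorem linHom_apply_map (ρ : Representation L G V) (b g : G) :
    ρ.linHom ρ b (ρ g) = ρ (b * g * b⁻¹) := by
  rw [Representation.linHom_apply, map_mul, map_mul, mul_assoc]
  rfl

section Finite

variable [IsAlgClosed L] [FiniteDimensional L V] [ρ.IsIrreducible]

theorem exists_map_eq_algebraMap_of_mem_center {z : G} (hz : z ∈ Subgroup.center G) :
    ∃ c : L, ρ z = algebraMap L _ c := by
  let f : ρ.IntertwiningMap ρ :=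
    ⟨ρ z, fun g => by
      rw [← Module.End.mul_eq_comp, ← Module.End.mul_eq_comp, ← map_mul, ← map_mul,
        Subgroup.mem_center_iff.1 hz g]⟩
  obtain ⟨c, hc⟩ :=
    (Representation.IsIrreducible.algebraMap_intertwiningMap_bijective_of_isAlgClosed (ρ := ρ)).2 f
  exact ⟨c, (congrArg Representation.IntertwiningMap.toLinearMap hc).symm⟩

theorem le_center_of_forall_commute (hρ : Function.Injective ρ) (hX : Subgroup.closure X = ⊤)
    (hneat : ∀ x ∈ X, IsNeat L (ρ x)) [A.Normal] (hA : ∀ a ∈ A, ∀ b ∈ A, Commute a b) :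
    A ≤ Subgroup.center G := by
  have hρA (a b : A) : Commute (ρ a) (ρ b) := (hA a a.2 b b.2).map ρ
  obtain ⟨_, hirr⟩ := isIrreducible_iff_forall_eq_bot_or_eq_top.1 ‹ρ.IsIrreducible›
  obtain ⟨v, hv, χ, hχ⟩ := exists_forall_apply_eq_smul hρA
  have hinv (g : G) : ρ g ∈ invtSubalgebra (weightSpace ρ A χ) := by
    refine map_mem_of_closure_eq_top ρ _ hX (fun x hx => ?_) g
    obtain ⟨k, hk, hpow⟩ := exists_weightSpace_le_comap_pow hρA χ x
    exact (hneat x hx).mem_of_pow_mem _ hk (mem_invtSubalgebra.2 hpow)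
  have htop : weightSpace ρ A χ = ⊤ :=
    (hirr _ fun g => mem_invtSubalgebra.1 (hinv g)).resolve_left <|
      (Submodule.ne_bot_iff _).2 ⟨v, mem_weightSpace.2 hχ, hv⟩
  intro a ha
  refine mem_center_of_map_eq_algebraMap hρ (c := χ ⟨a, ha⟩) (LinearMap.ext fun w => ?_)
  exact mem_weightSpace.1 (htop ▸ Submodule.mem_top : w ∈ weightSpace ρ A χ) ⟨a, ha⟩

theorem commutatorElement_pow_finrank_eq_one (hρ : Function.Injective ρ) {x a : G}
    (h : ⁅x, a⁆ ∈ Subgroup.center G) : ⁅x, a⁆ ^ finrank L V = 1 := by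
  obtain ⟨c, hc⟩ := exists_map_eq_algebraMap_of_mem_center (ρ := ρ) h
  have hdet : LinearMap.det (ρ ⁅x, a⁆) = 1 := by
    let δ : G →* Lˣ := (LinearMap.det.comp ρ).toHomUnits
    have hδ : δ ⁅x, a⁆ = 1 :=
      (map_commutatorElement δ x a).trans (commutatorElement_eq_one_iff_commute.2 (.all _ _))
    exact congrArg Units.val hδ
  refine hρ ?_
  rw [hc, Module.algebraMap_end_eq_smul_id, LinearMap.det_smul, LinearMap.det_id, mul_one] at hdet
  rw [map_pow, hc, ← map_pow, hdet, map_one, map_one]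

theorem linHom_apply_of_mem_center {z : G} (hz : z ∈ Subgroup.center G) (T : End L V) :
    ρ.linHom ρ z T = T := by
  obtain ⟨c, hc⟩ := exists_map_eq_algebraMap_of_mem_center (ρ := ρ) hz
  rw [Representation.linHom_apply, ← Module.End.mul_eq_comp, ← Module.End.mul_eq_comp, hc,
    Algebra.commutes, mul_assoc, ← hc, ← map_mul, inv_mul_cancel, map_one, mul_one]

theorem commute_linHom_of_commutatorElement_mem_center {a b : G}
    (h : ⁅a, b⁆ ∈ Subgroup.center G) : Commute (ρ.linHom ρ a) (ρ.linHom ρ b) := by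
  have hab : a * b = ⁅a, b⁆ * (b * a) := by simp [commutatorElement_def, mul_assoc]
  refine LinearMap.ext fun T => ?_
  rw [← map_mul, ← map_mul, hab, map_mul, Module.End.mul_apply, linHom_apply_of_mem_center h]

theorem exists_pow_forall_commute_commutatorElement (hρ : Function.Injective ρ) [A.Normal]
    (hA : ⁅A, A⁆ ≤ Subgroup.center G) {a : G} (ha : a ∈ A) (x : G) :
    ∃ k, 0 < k ∧ ∀ b ∈ A, Commute b ⁅x ^ k, a⁆ := by
  have hcenter (b : A) : ⁅(b : G), a⁆ ∈ Subgroup.center G :=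
    hA (Subgroup.commutator_mem_commutator b.2 ha)
  choose χ hχ using fun b => exists_map_eq_algebraMap_of_mem_center (ρ := ρ) (hcenter b)
  have hweight : ρ a ∈ weightSpace (ρ.linHom ρ) A χ := mem_weightSpace.2 fun b => by
    rw [linHom_apply_map, ← MulAut.conj_apply, conj_eq_commutatorElement_mul, map_mul, hχ,
      Algebra.algebraMap_eq_smul_one, smul_one_mul]
  obtain ⟨k, hk, hle⟩ := exists_weightSpace_le_comap_pow
    (fun b c : A => commute_linHom_of_commutatorElement_mem_center (ρ := ρ)
      (hA (Subgroup.commutator_mem_commutator b.2 c.2))) χ x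
  refine ⟨k, hk, fun b hb => ?_⟩
  have hu := mem_weightSpace.1 (hle hweight) ⟨b, hb⟩
  rw [← map_pow, linHom_apply_map, linHom_apply_map, ← smul_one_mul,
    ← Algebra.algebraMap_eq_smul_one, ← hχ, ← map_mul] at hu
  have hconj : b * (x ^ k * a * (x ^ k)⁻¹) * b⁻¹ = ⁅b, a⁆ * (x ^ k * a * (x ^ k)⁻¹) := hρ hu
  refine mul_inv_eq_iff_eq_mul.1 ?_
  calc b * ⁅x ^ k, a⁆ * b⁻¹
      = (b * (x ^ k * a * (x ^ k)⁻¹) * b⁻¹) * (b * a * b⁻¹)⁻¹ := by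
        simp [commutatorElement_def, mul_assoc]
    _ = ⁅b, a⁆ * (⁅x ^ k, a⁆ * ⁅b, a⁆⁻¹) := by
        rw [hconj]; simp [commutatorElement_def, mul_assoc]
    _ = ⁅x ^ k, a⁆ := by
        rw [← mul_assoc, ← Subgroup.mem_center_iff.1 (hcenter ⟨b, hb⟩), mul_inv_cancel_right]

theorem le_center_of_commutator_le_center (hρ : Function.Injective ρ)
    (hX : Subgroup.closure X = ⊤) (hneat : ∀ x ∈ X, IsNeat L (ρ x)) [A.Normal]
    (hA : ⁅A, A⁆ ≤ Subgroup.center G) : A ≤ Subgroup.center G := by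
  have hZ : A ⊓ Subgroup.centralizer A ≤ Subgroup.center G :=
    le_center_of_forall_commute hρ hX hneat fun a ha b hb =>
      (Subgroup.mem_centralizer_iff.1 ha.2 b hb.1).symm
  suffices hcomm : ∀ a ∈ A, ∀ x ∈ X, Commute x a by
    intro a ha
    have hle : (⊤ : Subgroup G) ≤ Subgroup.centralizer {a} :=
      hX ▸ (Subgroup.closure_le _).2 fun x hx =>
        Subgroup.mem_centralizer_singleton_iff.2 (hcomm a ha x hx)
    exact Subgroup.mem_center_iff.2 fun g =>
      Subgroup.mem_centralizer_singleton_iff.1 (hle (Subgroup.mem_top g))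
  intro a ha x hx
  obtain ⟨k, hk, hb⟩ := exists_pow_forall_commute_commutatorElement hρ hA ha x
  have hmem : ⁅x ^ k, a⁆ ∈ Subgroup.center G := hZ
    ⟨Subgroup.commutator_le_right ⊤ A (Subgroup.commutator_mem_commutator (Subgroup.mem_top _) ha),
      Subgroup.mem_centralizer_iff.2 hb⟩
  have : Nontrivial V := (isIrreducible_iff_forall_eq_bot_or_eq_top.1 ‹ρ.IsIrreducible›).1
  have hpow : Commute (x ^ (k * finrank L V)) a := pow_mul x k _ ▸
    commute_pow_of_commutatorElement_pow_eq_one (Subgroup.mem_center_iff.1 hmem _).symm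
      (commutatorElement_pow_finrank_eq_one hρ hmem)
  exact commute_of_commute_pow hρ (hneat x hx) (Nat.mul_pos hk finrank_pos) hpow

theorem le_center_of_isSolvable (hρ : Function.Injective ρ) (hX : Subgroup.closure X = ⊤)
    (hneat : ∀ x ∈ X, IsNeat L (ρ x)) [A.Normal] [Group.IsSolvable A] : A ≤ Subgroup.center G := by
  have key (m : ℕ) (h : (derivedSeries A m).map A.subtype ≤ Subgroup.center G) :
      A ≤ Subgroup.center G := by
    induction m with
    | zero => simpa [← MonoidHom.range_eq_map] using h
    | succ m ih =>
      refine ih (le_center_of_commutator_le_center hρ hX hneat ?_)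
      rwa [← Subgroup.map_commutator]
  obtain ⟨m, hm⟩ := Group.IsSolvable.solvable (G := A)
  exact key m (by simp [hm])

theorem center_eq_top_of_isVirtuallySolvable (hρ : Function.Injective ρ)
    (hX : Subgroup.closure X = ⊤) (hneat : ∀ x ∈ X, IsNeat L (ρ x)) (hG : IsVirtuallySolvable G) :
    Subgroup.center G = ⊤ := by
  obtain ⟨H, hH, hsol⟩ := hG
  have : Group.IsSolvable H := hsol
  have : Group.IsSolvable H.normalCore :=
    Group.isSolvable_of_isSolvable_injective (Subgroup.inclusion_injective H.normalCore_le)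
  have hcore : H.normalCore ≤ Subgroup.center G := le_center_of_isSolvable hρ hX hneat
  rw [eq_top_iff, ← hX, Subgroup.closure_le]
  intro x hx
  refine Subgroup.mem_center_iff.2 fun g => ?_
  have hpow : x ^ H.normalCore.index ∈ Subgroup.center G :=
    hcore (Subgroup.pow_index_mem H.normalCore x)
  exact (commute_of_commute_pow hρ (hneat x hx)
    (Nat.pos_of_ne_zero Subgroup.FiniteIndex.index_ne_zero)
    (Subgroup.mem_center_iff.1 hpow g).symm).symm

end Finite

end Irreducible

theorem IsVirtuallySolvable.of_surjective {G H : Type*} [Group G] [Group H] {f : G →* H}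
    (hf : Function.Surjective f) (hG : IsVirtuallySolvable G) : IsVirtuallySolvable H := by
  obtain ⟨S, hS, hsol⟩ := hG
  have : Group.IsSolvable S := hsol
  exact ⟨S.map f, ⟨ne_zero_of_dvd_ne_zero hS.index_ne_zero (S.index_map_dvd hf)⟩,
    Group.isSolvable_of_surjective (f.subgroupMap_surjective S)⟩

section DerivedLength

variable {L V G : Type*} [Field L] [AddCommGroup V] [Module L V] [Group G]
  {ρ : Representation L G V} {X : Set G}

theorem commutatorElement_mem_ker {M : Type*} [Monoid M] {f : G →* M} {a b : G}
    (h : Commute (f a) (f b)) : ⁅a, b⁆ ∈ f.ker := by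
  have hab : ⁅a, b⁆ = a * b * (b * a)⁻¹ := by simp [commutatorElement_def, mul_assoc]
  have hcomm : f (a * b) = f (b * a) := by rw [map_mul, map_mul, h.eq]
  rw [MonoidHom.mem_ker, hab, map_mul, hcomm, ← map_mul, mul_inv_cancel, map_one]

theorem commutator_le_ker_of_isIrreducible [IsAlgClosed L] [FiniteDimensional L V]
    [ρ.IsIrreducible] (hX : Subgroup.closure X = ⊤) (hneat : ∀ x ∈ X, IsNeat L (ρ x))
    (hG : IsVirtuallySolvable G) : commutator G ≤ ρ.ker := by
  let f := ρ.toHomUnits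
  let τ : Representation L f.range V := (Units.coeHom _).comp f.range.subtype
  have : τ.IsIrreducible := by
    refine isIrreducible_iff_forall_eq_bot_or_eq_top.2 ?_
    exact (isIrreducible_iff_forall_eq_bot_or_eq_top.1 ‹ρ.IsIrreducible›).imp_right
      fun h W hW => h W fun g => hW (f.rangeRestrict g)
  have hclosure : Subgroup.closure (f.rangeRestrict '' X) = ⊤ := by
    rw [← MonoidHom.map_closure, hX, Subgroup.map_top_of_surjective _ f.rangeRestrict_surjective]
  have hcenter : Subgroup.center f.range = ⊤ :=
    center_eq_top_of_isVirtuallySolvable (ρ := τ)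
      (Units.val_injective.comp Subtype.val_injective) hclosure
      (Set.forall_mem_image.2 hneat) (hG.of_surjective f.rangeRestrict_surjective)
  refine Subgroup.commutator_le.2 fun a _ b _ => ?_
  have hcomm : Commute (f.rangeRestrict a) (f.rangeRestrict b) :=
    (Subgroup.mem_center_iff.1 (hcenter ▸ Subgroup.mem_top (f.rangeRestrict b)) _)
  exact commutatorElement_mem_ker (hcomm.map τ)

theorem commutator_le_ker_of_apply_sub_mem {W : Submodule L V} {D : Subgroup G}
    (hW : ∀ d ∈ D, ∀ w ∈ W, ρ d w = w) (hVW : ∀ d ∈ D, ∀ v, ρ d v - v ∈ W) :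
    ⁅D, D⁆ ≤ ρ.ker := by
  refine Subgroup.commutator_le.2 fun a ha b hb => ?_
  refine commutatorElement_mem_ker (LinearMap.ext fun v => ?_)
  have hab := hW a ha _ (hVW b hb v)
  have hba := hW b hb _ (hVW a ha v)
  rw [map_sub, sub_eq_iff_eq_add] at hab hba
  rw [Module.End.mul_apply, Module.End.mul_apply, hab, hba]
  abel

theorem derivedSeries_le_ker_of_isNeat [IsAlgClosed L] [FiniteDimensional L V]
    (hX : Subgroup.closure X = ⊤) (hneat : ∀ x ∈ X, IsNeat L (ρ x))
    (hG : IsVirtuallySolvable G) {n : ℕ} (hn : finrank L V ≤ n) :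
    derivedSeries G n ≤ ρ.ker := by
  induction n generalizing V with
  | zero =>
    have := finrank_zero_iff.1 (Nat.le_zero.1 hn)
    exact fun g _ => LinearMap.ext fun v => Subsingleton.elim _ _
  | succ n ih =>
    obtain _ | _ := subsingleton_or_nontrivial V
    · exact fun g _ => LinearMap.ext fun v => Subsingleton.elim _ _
    by_cases hirr : ρ.IsIrreducible
    · exact (derivedSeries_antitone G (Nat.le_add_left 1 n)).trans
        (derivedSeries_one G ▸ commutator_le_ker_of_isIrreducible hX hneat hG)
    obtain ⟨W, hW, hbot, htop⟩ : ∃ W : Submodule L V, (∀ g, W ≤ W.comap (ρ g)) ∧ W ≠ ⊥ ∧ W ≠ ⊤ := by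
      simpa [isIrreducible_iff_forall_eq_bot_or_eq_top, ‹Nontrivial V›] using hirr
    have hadd := Submodule.finrank_quotient_add_finrank W
    have hsub := ih (ρ := ρ.subrepresentation W hW)
      (fun x hx => (hneat x hx).restrict (hW x)) (by have := Submodule.finrank_lt htop; lia)
    have hquot := ih (ρ := ρ.quotient W hW) (fun x hx => (hneat x hx).mapQ (hW x))
      (by have := Submodule.one_le_finrank_iff.2 hbot; lia)
    rw [derivedSeries_succ]
    exact commutator_le_ker_of_apply_sub_mem (W := W)
      (fun d hd w hw => congrArg Subtype.val (LinearMap.congr_fun (hsub hd) ⟨w, hw⟩))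
      (fun d hd v => (Submodule.Quotient.eq W).1 (LinearMap.congr_fun (hquot hd) (W.mkQ v)))

end DerivedLength

section BoundedGeneration

variable {G H : Type*} [Group G] [Group H]

theorem IsVirtuallySolvable.of_injective {f : G →* H} (hf : Function.Injective f)
    (hH : IsVirtuallySolvable H) : IsVirtuallySolvable G := by
  obtain ⟨S, hS, hsol⟩ := hH
  have : Group.IsSolvable S := hsol
  have hindex : (S.subgroupOf f.range).index ≠ 0 := Subgroup.FiniteIndex.index_ne_zero
  exact ⟨S.comap f, ⟨(S.index_comap f).trans_ne hindex⟩,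
    Group.isSolvable_of_isSolvable_injective (f := f.subgroupComap S) fun _ _ h =>
      Subtype.ext (hf (congrArg Subtype.val h))⟩

/-- The group `G` is the product `⟨γ₁⟩⋯⟨γᵣ⟩` of the cyclic subgroups generated by the `γᵢ`. -/
def BoundedlyGenerates {r : ℕ} (γ : Fin r → G) : Prop :=
  ∀ x, ∃ k : Fin r → ℤ, x = (List.ofFn fun i => γ i ^ k i).prod

variable {r : ℕ} {γ : Fin r → G} {N : ℕ}

theorem map_prod_ofFn_zpow (f : G →* H) (γ : Fin r → G) (k : Fin r → ℤ) :
    f (List.ofFn fun i => γ i ^ k i).prod = (List.ofFn fun i => f (γ i) ^ k i).prod := by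
  simp only [map_list_prod, List.map_ofFn, Function.comp_def, map_zpow]

theorem BoundedlyGenerates.closure_range_eq_top (hγ : BoundedlyGenerates γ) :
    Subgroup.closure (Set.range γ) = ⊤ := by
  refine (Subgroup.eq_top_iff' _).2 fun x => ?_
  obtain ⟨k, rfl⟩ := hγ x
  refine Subgroup.list_prod_mem _ fun y hy => ?_
  obtain ⟨i, rfl⟩ := List.mem_ofFn.1 hy
  exact Subgroup.zpow_mem _ (Subgroup.subset_closure (Set.mem_range_self i)) _

theorem BoundedlyGenerates.map_surjective (hγ : BoundedlyGenerates γ) {f : G →* H}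
    (hf : Function.Surjective f) : BoundedlyGenerates fun i => f (γ i) := fun y => by
  obtain ⟨x, rfl⟩ := hf y
  obtain ⟨k, rfl⟩ := hγ x
  exact ⟨k, map_prod_ofFn_zpow f γ k⟩

theorem BoundedlyGenerates.finite (hγ : BoundedlyGenerates γ) (hN : 0 < N)
    (h : ∀ x : G, x ^ N = 1) : Finite G := by
  have (i : Fin r) : Finite (Subgroup.zpowers (γ i)) :=
    isOfFinOrder_iff_pow_eq_one.2 ⟨N, hN, h (γ i)⟩ |>.finite_zpowers
  refine .of_surjective
    (fun y : (i : Fin r) → Subgroup.zpowers (γ i) => (List.ofFn fun i => (y i : G)).prod) ?_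
  intro x
  obtain ⟨k, rfl⟩ := hγ x
  exact ⟨fun i => ⟨γ i ^ k i, k i, rfl⟩, rfl⟩

variable (G N) in
/-- The subgroup generated by the `N`-th powers. -/
def powSubgroup : Subgroup G :=
  Subgroup.closure (Set.range (· ^ N))

theorem pow_mem_powSubgroup (x : G) : x ^ N ∈ powSubgroup G N :=
  Subgroup.subset_closure ⟨x, rfl⟩

theorem powSubgroup_le_comap (f : G →* H) : powSubgroup G N ≤ (powSubgroup H N).comap f := by
  refine (Subgroup.closure_le _).2 ?_
  rintro _ ⟨x, rfl⟩
  exact Subgroup.mem_comap.2 (map_pow f x N ▸ pow_mem_powSubgroup (f x))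

instance normal_powSubgroup : (powSubgroup G N).Normal :=
  ⟨fun _ hn g => powSubgroup_le_comap (MulAut.conj g).toMonoidHom hn⟩

theorem BoundedlyGenerates.finiteIndex_powSubgroup (hγ : BoundedlyGenerates γ) (hN : 0 < N) :
    (powSubgroup G N).FiniteIndex := by
  have : Finite (G ⧸ powSubgroup G N) :=
    (hγ.map_surjective (QuotientGroup.mk'_surjective (powSubgroup G N))).finite hN fun x => by
      obtain ⟨x, rfl⟩ := QuotientGroup.mk'_surjective _ x
      exact (QuotientGroup.eq_one_iff _).2 (pow_mem_powSubgroup x)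
  exact Subgroup.finiteIndex_of_finite_quotient

theorem derivedSeries_powSubgroup_eq_bot_of_separating {d : ℕ}
    (h : ∀ g : G, g ≠ 1 → ∃ (Δ : Type*) (_ : Group Δ) (f : G →* Δ),
      f g ≠ 1 ∧ derivedSeries (powSubgroup Δ N) d = ⊥) :
    derivedSeries (powSubgroup G N) d = ⊥ := by
  refine (Subgroup.eq_bot_iff_forall _).2 fun g hg => by_contra fun hne => ?_
  obtain ⟨Δ, _, f, hfg, hΔ⟩ := h g (OneMemClass.coe_eq_one.not.2 hne)
  let f' : powSubgroup G N →* powSubgroup Δ N :=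
    (f.comp (powSubgroup G N).subtype).codRestrict _ fun x => powSubgroup_le_comap f x.2
  have hf'g : f' g ∈ derivedSeries (powSubgroup Δ N) d :=
    map_derivedSeries_le_derivedSeries f' d (Subgroup.mem_map_of_mem f' hg)
  rw [hΔ, Subgroup.mem_bot] at hf'g
  exact hfg (congrArg Subtype.val hf'g)

end BoundedGeneration

theorem dvd_factorial_of_totient_le {m B : ℕ} (hm : m ≠ 0) (h : m.totient ≤ B) :
    m ∣ (2 * B).factorial := by
  refine (Nat.dvd_iff_prime_pow_dvd_dvd _ _).2 fun p k hp hdvd => ?_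
  obtain _ | k := k
  · simp
  have htotient : p ^ k * (p - 1) ≤ B := by
    rw [← Nat.totient_prime_pow_succ hp]
    exact (Nat.le_of_dvd (Nat.totient_pos.2 hm.bot_lt) (Nat.totient_dvd_of_dvd hdvd)).trans h
  refine Nat.dvd_factorial (pow_pos hp.pos _) ?_
  calc p ^ (k + 1) = p ^ k * p := pow_succ p k
    _ ≤ p ^ k * (2 * (p - 1)) := Nat.mul_le_mul_left _ (by have := hp.two_le; lia)
    _ = 2 * (p ^ k * (p - 1)) := mul_left_comm _ _ _
    _ ≤ 2 * B := Nat.mul_le_mul_left 2 htotient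

section RootsOfUnity

theorem pow_factorial_eq_one_of_isOfFinOrder {E : Type*} [Field E] [NumberField E] {ζ : E}
    (hζ : IsOfFinOrder ζ) {B : ℕ} (hB : finrank ℚ E ≤ B) : ζ ^ (2 * B).factorial = 1 := by
  have hprim := IsPrimitiveRoot.orderOf ζ
  have htotient := hprim.lcm_totient_le_finrank (K := ℚ) hprim <| by
    rw [Nat.lcm_self]; exact cyclotomic.irreducible_rat hζ.orderOf_pos
  rw [Nat.lcm_self] at htotient
  exact orderOf_dvd_iff_pow_eq_one.1
    (dvd_factorial_of_totient_le hζ.orderOf_pos.ne' (htotient.trans hB))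

theorem finrank_adjoin_sup_adjoin_le {F L : Type*} [Field F] [Field L] [Algebra F L] {p : F[X]}
    (hp : p ≠ 0) {a b : L} (ha : aeval a p = 0) (hb : aeval b p = 0) :
    finrank F ↥(IntermediateField.adjoin F {a} ⊔ IntermediateField.adjoin F {b}) ≤
      p.natDegree * p.natDegree := by
  have hle {c : L} (hc : aeval c p = 0) :
      finrank F (IntermediateField.adjoin F {c}) ≤ p.natDegree := by
    have : IsIntegral F c := IsAlgebraic.isIntegral ⟨p, hp, hc⟩
    rw [IntermediateField.adjoin.finrank this]
    exact natDegree_le_of_dvd (minpoly.dvd F c hc) hp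
  exact (IntermediateField.finrank_sup_le _ _).trans (Nat.mul_le_mul (hle ha) (hle hb))

theorem pow_factorial_eq_pow_factorial_of_aeval_eq_zero {F L : Type*} [Field F] [NumberField F]
    [Field L] [Algebra F L] {p : F[X]} (hp : p ≠ 0) {a b : L} (ha : aeval a p = 0)
    (hb : aeval b p = 0) (hb0 : b ≠ 0) {k : ℕ} (hk : 0 < k) (hab : a ^ k = b ^ k) {B : ℕ}
    (hB : finrank ℚ F * (p.natDegree * p.natDegree) ≤ B) :
    a ^ (2 * B).factorial = b ^ (2 * B).factorial := by
  let E := IntermediateField.adjoin F {a} ⊔ IntermediateField.adjoin F {b}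
  have hfin {c : L} (hc : aeval c p = 0) : FiniteDimensional F (IntermediateField.adjoin F {c}) :=
    IntermediateField.adjoin.finiteDimensional (IsAlgebraic.isIntegral ⟨p, hp, hc⟩)
  have := hfin ha
  have := hfin hb
  have : FiniteDimensional F E := IntermediateField.finiteDimensional_sup _ _
  have : CharZero E := charZero_of_injective_algebraMap (algebraMap F E).injective
  have : FiniteDimensional ℚ E := .trans ℚ F E
  have : NumberField E := ⟨⟩
  have hE : finrank ℚ E ≤ B := by
    rw [← finrank_mul_finrank ℚ F E]
    exact (Nat.mul_le_mul_left _ (finrank_adjoin_sup_adjoin_le hp ha hb)).trans hB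
  have haE : a ∈ E := le_sup_left (b := IntermediateField.adjoin F {b})
    (IntermediateField.mem_adjoin_simple_self F a)
  have hbE : b ∈ E := le_sup_right (a := IntermediateField.adjoin F {a})
    (IntermediateField.mem_adjoin_simple_self F b)
  have hζ : IsOfFinOrder (⟨a / b, div_mem haE hbE⟩ : E) :=
    isOfFinOrder_iff_pow_eq_one.2 ⟨k, hk, Subtype.ext <| by
      rw [SubmonoidClass.coe_pow, div_pow, hab, div_self (pow_ne_zero k hb0), OneMemClass.coe_one]⟩
  have hpow := congrArg Subtype.val (pow_factorial_eq_one_of_isOfFinOrder hζ hE)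
  exact (div_eq_one_iff_eq (pow_ne_zero _ hb0)).1 (by simpa [div_pow] using hpow)

end RootsOfUnity

section StandardRepresentation

theorem isNeat_pow {L V : Type*} [Field L] [IsAlgClosed L] [CharZero L] [AddCommGroup V]
    [Module L V] [FiniteDimensional L V] {T : End L V} (hT : IsUnit T) {N : ℕ} (hN : 0 < N)
    (h : ∀ a b, T.HasEigenvalue a → T.HasEigenvalue b → ∀ k, 0 < k → a ^ k = b ^ k →
      a ^ N = b ^ N) : IsNeat L (T ^ N) := by
  have hpow {c : L} (hc : (minpoly L (T ^ N)).IsRoot c) : ∃ a, T.HasEigenvalue a ∧ a ^ N = c := by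
    have := (End.hasEigenvalue_of_isRoot hc).mem_spectrum
    rw [spectrum.map_pow_of_pos T hN] at this
    exact this.imp fun a => And.imp_left End.HasEigenvalue.of_mem_spectrum
  refine isNeat_of_injOn_pow (hT.pow N) fun k hk c hc d hd hcd => ?_
  obtain ⟨a, ha, rfl⟩ := hpow hc
  obtain ⟨b, hb, rfl⟩ := hpow hd
  exact h a b ha hb (N * k) (Nat.mul_pos hN hk) (by simpa only [pow_mul] using hcd)

/-- The action of `GL n F` on `L ^ n` for an `F`-algebra `L`. -/
noncomputable def stdRep (n : ℕ) (F L : Type*) [CommRing F] [CommRing L] [Algebra F L] :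
    Representation L (GL (Fin n) F) (Fin n → L) :=
  ((Matrix.toLinAlgEquiv' (R := L) (n := Fin n)).toAlgHom : _ →* _).comp
    ((Units.coeHom _).comp (Matrix.GeneralLinearGroup.map (algebraMap F L)))

variable {n : ℕ} {F L : Type*} [Field F] [Field L] [Algebra F L]

theorem stdRep_injective : Function.Injective (stdRep n F L) :=
  (Matrix.toLinAlgEquiv' (R := L) (n := Fin n)).injective.comp <| Units.val_injective.comp <|
    Units.map_injective (Matrix.map_injective (algebraMap F L).injective)

theorem aeval_charpoly_eq_zero_of_hasEigenvalue_stdRep {g : GL (Fin n) F} {a : L}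
    (ha : End.HasEigenvalue (stdRep n F L g) a) :
    aeval a (g : Matrix (Fin n) (Fin n) F).charpoly = 0 := by
  have hroot := (End.hasEigenvalue_iff_isRoot_charpoly _ a).1 ha
  have hchar : (stdRep n F L g).charpoly =
      (g : Matrix (Fin n) (Fin n) F).charpoly.map (algebraMap F L) :=
    (Matrix.charpoly_toLin' _).trans (Matrix.charpoly_map _ _)
  rwa [hchar, IsRoot, eval_map_algebraMap] at hroot

theorem isNeat_stdRep_pow_factorial [NumberField F] [IsAlgClosed L] {D : ℕ}
    (hD : finrank ℚ F ≤ D) (g : GL (Fin n) F) :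
    IsNeat L (stdRep n F L (g ^ (2 * (D * (n * n))).factorial)) := by
  have : CharZero L := charZero_of_injective_algebraMap (algebraMap F L).injective
  have hunit : IsUnit (stdRep n F L g) := (Group.isUnit g).map _
  rw [map_pow]
  refine isNeat_pow hunit (Nat.factorial_pos _) fun a b ha hb k hk hab => ?_
  refine pow_factorial_eq_pow_factorial_of_aeval_eq_zero
    (Matrix.charpoly_monic (g : Matrix (Fin n) (Fin n) F)).ne_zero
    (aeval_charpoly_eq_zero_of_hasEigenvalue_stdRep ha)
    (aeval_charpoly_eq_zero_of_hasEigenvalue_stdRep hb) ?_ hk hab ?_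
  · rintro rfl
    exact (spectrum.zero_notMem_iff L).2 hunit hb.mem_spectrum
  · simpa [Matrix.charpoly_natDegree_eq_dim] using Nat.mul_le_mul_right (n * n) hD

theorem derivedSeries_powSubgroup_eq_bot [NumberField F] {D : ℕ} (hD : finrank ℚ F ≤ D)
    (Δ : Subgroup (GL (Fin n) F)) (hΔ : IsVirtuallySolvable Δ) :
    derivedSeries (powSubgroup Δ (2 * (D * (n * n))).factorial) n = ⊥ := by
  let N := (2 * (D * (n * n))).factorial
  let ρ : Representation (AlgebraicClosure F) (powSubgroup Δ N) (Fin n → AlgebraicClosure F) :=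
    (stdRep n F (AlgebraicClosure F)).comp (Δ.subtype.comp (powSubgroup Δ N).subtype)
  have hρ : Function.Injective ρ :=
    stdRep_injective.comp (Subtype.val_injective.comp Subtype.val_injective)
  have hle : derivedSeries (powSubgroup Δ N) n ≤ ρ.ker := by
    refine derivedSeries_le_ker_of_isNeat Subgroup.closure_closure_coe_preimage ?_
      (hΔ.of_injective (powSubgroup Δ N).subtype_injective) (by simp)
    rintro ⟨_, _⟩ ⟨x, rfl⟩
    exact isNeat_stdRep_pow_factorial hD (x : GL (Fin n) F)
  exact eq_bot_iff.2 fun x hx => hρ ((MonoidHom.mem_ker.1 (hle hx)).trans (map_one ρ).symm)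

end StandardRepresentation

section Specialization

theorem span_restrictScalars_eq_top_of_smul_eq {k P M : Type*} [CommSemiring k] [Semiring P]
    [AddCommMonoid M] [Module k M] [Module P M] {ε : P → k} (hε : ∀ p (x : M), p • x = ε p • x)
    {s : Set M} (hs : Submodule.span P s = ⊤) : Submodule.span k s = ⊤ := by
  refine Submodule.eq_top_iff'.2 fun x => ?_
  have hx : x ∈ Submodule.span P s := hs ▸ Submodule.mem_top
  induction hx using Submodule.span_induction with
  | mem x hx => exact Submodule.subset_span hx
  | zero => exact zero_mem _
  | add x y _ _ hx hy => exact add_mem hx hy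
  | smul p x _ hx => exact hε p x ▸ Submodule.smul_mem _ _ hx

theorem finite_quotient_and_finrank_le_of_comap_eq_ker {k P R : Type*} [Field k] [CommRing P]
    [CommRing R] [Algebra k P] [Algebra P R] [Algebra k R] [IsScalarTower k P R] {ε : P →ₐ[k] k}
    {Q : Ideal R} (hQ : Q.comap (algebraMap P R) = RingHom.ker ε) {t : Finset R}
    (ht : Submodule.span P (t : Set R) = ⊤) :
    Module.Finite k (R ⧸ Q) ∧ finrank k (R ⧸ Q) ≤ t.card := by
  classical
  have hmk (p : P) :
      Ideal.Quotient.mk Q (algebraMap P R p) = Ideal.Quotient.mk Q (algebraMap k R (ε p)) := by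
    have hp : p - algebraMap k P (ε p) ∈ Q.comap (algebraMap P R) := by
      rw [hQ, RingHom.mem_ker, map_sub, AlgHom.commutes, Algebra.algebraMap_self_apply, sub_self]
    rwa [Ideal.mem_comap, map_sub, ← IsScalarTower.algebraMap_apply, ← Ideal.Quotient.eq] at hp
  have hsmul (p : P) (x : R ⧸ Q) : p • x = ε p • x := by
    obtain ⟨x, rfl⟩ := Ideal.Quotient.mk_surjective x
    change Ideal.Quotient.mk Q (p • x) = Ideal.Quotient.mk Q (ε p • x)
    rw [Algebra.smul_def, Algebra.smul_def, map_mul, map_mul, hmk]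
  have hP : Submodule.span P (Ideal.Quotient.mkₐ P Q '' t) = ⊤ := by
    have := Submodule.map_span (Ideal.Quotient.mkₐ P Q).toLinearMap (t : Set R)
    rw [ht, Submodule.map_top, LinearMap.range_eq_top.2 (Ideal.Quotient.mkₐ_surjective P Q)] at this
    exact this.symm
  have hk : Submodule.span k (t.image (Ideal.Quotient.mk Q) : Set (R ⧸ Q)) = ⊤ := by
    rw [Finset.coe_image]
    exact span_restrictScalars_eq_top_of_smul_eq hsmul hP
  refine ⟨⟨⟨_, hk⟩⟩, ?_⟩
  rw [← finrank_top, ← hk]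
  exact (finrank_span_finset_le_card _).trans Finset.card_image_le

theorem exists_algHom_ne_zero_finrank_le (k : Type*) (R : Type u) [Field k] [Infinite k]
    [CommRing R] [IsDomain R] [Algebra k R] [Algebra.FiniteType k R] :
    ∃ D : ℕ, ∀ a : R, a ≠ 0 → ∃ (E : Type u) (_ : Field E) (_ : Algebra k E)
      (φ : R →ₐ[k] E), φ a ≠ 0 ∧ Module.Finite k E ∧ finrank k E ≤ D := by
  obtain ⟨s, f, hf, hfin⟩ := exists_finite_inj_algHom_of_fg k R
  let P := MvPolynomial (Fin s) k
  algebraize [f.toRingHom]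
  have : Module.Finite P R := hfin
  obtain ⟨t, ht⟩ := this.fg_top
  refine ⟨t.card, fun a ha => ?_⟩
  obtain ⟨b, hb, hb0⟩ := Submodule.exists_mem_ne_zero_of_ne_bot <|
    Ideal.comap_ne_bot_of_integral_mem ha (Ideal.mem_span_singleton_self a)
      (Algebra.IsIntegral.isIntegral (R := P) a)
  obtain ⟨v, hv⟩ : ∃ v : Fin s → k, MvPolynomial.aeval v b ≠ 0 := by
    by_contra! h
    exact hb0 <| MvPolynomial.funext fun v => by simpa [MvPolynomial.aeval_eq_eval] using h v
  let ε : P →ₐ[k] k := MvPolynomial.aeval v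
  have : (RingHom.ker ε).IsMaximal :=
    RingHom.ker_isMaximal_of_surjective ε fun c => ⟨algebraMap k P c, ε.commutes c⟩
  obtain ⟨Q, hQmax, hQ⟩ := Ideal.exists_ideal_over_maximal_of_isIntegral (S := R) (RingHom.ker ε)
    (((RingHom.injective_iff_ker_eq_bot _).1 hf).trans_le bot_le)
  refine ⟨R ⧸ Q, Ideal.Quotient.field Q, Ideal.Quotient.algebra k, Ideal.Quotient.mkₐ k Q,
    fun haQ => hv ?_, finite_quotient_and_finrank_le_of_comap_eq_ker hQ ht⟩
  rw [Ideal.Quotient.mkₐ_eq_mk, Ideal.Quotient.eq_zero_iff_mem] at haQ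
  have hbQ : b ∈ Q.comap (algebraMap P R) := (Ideal.span_singleton_le_iff_mem Q).2 haQ hb
  rwa [hQ] at hbQ

theorem exists_type_zero_algEquiv_of_numberField (E : Type*) [Field E] [NumberField E] :
    ∃ (F : Type) (_ : Field F) (_ : NumberField F), Nonempty (E ≃ₐ[ℚ] F) := by
  have : Countable E := (finBasis ℚ E).equivFun.toEquiv.countable_iff.2 inferInstance
  have : Small.{0} E := Countable.toSmall E
  let e := (Shrink.ringEquiv E).symm
  exact ⟨Shrink.{0} E, inferInstance, .of_ringEquiv _ _ e, ⟨e.toRatAlgEquiv⟩⟩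

theorem exists_numberField_ringHom_ne_zero (R : Type*) [CommRing R] [IsDomain R] [Algebra ℚ R]
    [Algebra.FiniteType ℚ R] :
    ∃ D : ℕ, ∀ a : R, a ≠ 0 → ∃ (F : Type) (_ : Field F) (_ : NumberField F) (φ : R →+* F),
      φ a ≠ 0 ∧ finrank ℚ F ≤ D := by
  obtain ⟨D, hD⟩ := exists_algHom_ne_zero_finrank_le ℚ R
  refine ⟨D, fun a ha => ?_⟩
  obtain ⟨E, _, hE, φ, hφ, hfin, hle⟩ := hD a ha
  have : CharZero E := charZero_of_injective_algebraMap (algebraMap ℚ E).injective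
  obtain rfl : hE = DivisionRing.toRatAlgebra := Subsingleton.elim _ _
  have : NumberField E := ⟨⟩
  obtain ⟨F, _, _, ⟨e⟩⟩ := exists_type_zero_algEquiv_of_numberField E
  refine ⟨F, _, ‹_›, (e : E →+* F).comp φ, ?_, e.toLinearEquiv.finrank_eq.symm.trans_le hle⟩
  exact (map_ne_zero_iff e e.injective).2 hφ

end Specialization

section Semisimplicity

variable {ι R S K : Type*} [Fintype ι] [DecidableEq ι] [CommRing R] [CommRing S] [Field K]

/-- A matrix annihilated by a separable polynomial. Over a field of characteristic zero this is
semisimplicity, but it makes sense over any ring and is stable under base change. -/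
def IsSeparablyAnnihilated (M : Matrix ι ι R) : Prop :=
  ∃ p : R[X], p.Separable ∧ aeval M p = 0

theorem aeval_mapMatrix (φ : R →+* S) (M : Matrix ι ι R) (p : R[X]) :
    aeval (φ.mapMatrix M) (p.map φ) = φ.mapMatrix (aeval M p) := by
  refine (map_aeval_eq_aeval_map (RingHom.ext fun x => ?_) p M).symm
  ext i j
  simp [Matrix.algebraMap_matrix_apply, apply_ite φ]

theorem IsSeparablyAnnihilated.mapMatrix {M : Matrix ι ι R} (hM : IsSeparablyAnnihilated M)
    (φ : R →+* S) : IsSeparablyAnnihilated (φ.mapMatrix M) := by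
  obtain ⟨p, hp, hpM⟩ := hM
  exact ⟨p.map φ, hp.map, by rw [aeval_mapMatrix, hpM, map_zero]⟩

theorem isSemisimpleElt_iff_isSeparablyAnnihilated [CharZero K] {n : ℕ} {g : GL (Fin n) K} :
    IsSemisimpleElt g ↔ IsSeparablyAnnihilated (g : Matrix (Fin n) (Fin n) K) := by
  let e := Matrix.toLinAlgEquiv' (R := K) (n := Fin n)
  have haeval (p : K[X]) : aeval (g : Matrix (Fin n) (Fin n) K).mulVecLin p = e (aeval g.1 p) :=
    aeval_algHom_apply e.toAlgHom g.1 p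
  constructor
  · intro hg
    refine ⟨_, PerfectField.separable_iff_squarefree.2 hg.minpoly_squarefree, e.injective ?_⟩
    rw [← haeval, minpoly.aeval, map_zero]
  · rintro ⟨p, hp, hpg⟩
    refine End.isSemisimple_of_squarefree_aeval_eq_zero hp.squarefree ?_
    rw [haeval, hpg, map_zero]

variable {k : Type*} [Field k] [Algebra k K]

theorem exists_mapMatrix_eq_of_forall_mem {R : Subalgebra k K} {M : Matrix ι ι K}
    (hM : ∀ i j, M i j ∈ R) : ∃ M' : Matrix ι ι R, (algebraMap R K).mapMatrix M' = M :=
  ⟨.of fun i j => ⟨M i j, hM i j⟩, rfl⟩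

theorem mapMatrix_algebraMap_injective (R : Subalgebra k K) :
    Function.Injective ((algebraMap R K).mapMatrix (m := ι)) :=
  Matrix.map_injective Subtype.val_injective

theorem map_algebraMap_injective (R : Subalgebra k K) :
    Function.Injective (Matrix.GeneralLinearGroup.map (n := ι) (algebraMap R K)) :=
  Units.map_injective (mapMatrix_algebraMap_injective R)

theorem exists_map_eq_of_forall_mem {R : Subalgebra k K} {g : GL ι K}
    (hg : ∀ i j, g.1 i j ∈ R) (hg' : ∀ i j, g⁻¹.1 i j ∈ R) :
    ∃ g' : GL ι R, Matrix.GeneralLinearGroup.map (algebraMap R K) g' = g := by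
  obtain ⟨A, hA⟩ := exists_mapMatrix_eq_of_forall_mem hg
  obtain ⟨B, hB⟩ := exists_mapMatrix_eq_of_forall_mem hg'
  have hinj := mapMatrix_algebraMap_injective (ι := ι) R
  exact ⟨⟨A, B, hinj (by rw [map_mul, hA, hB, map_one, Units.mul_inv]),
    hinj (by rw [map_mul, hA, hB, map_one, Units.inv_mul])⟩, Units.ext hA⟩

theorem IsSeparablyAnnihilated.exists_finset {M : Matrix ι ι K} (hM : IsSeparablyAnnihilated M) :
    ∃ s : Finset K, ∀ (R : Subalgebra k K) (M' : Matrix ι ι R), (s : Set K) ⊆ R →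
      (algebraMap R K).mapMatrix M' = M → IsSeparablyAnnihilated M' := by
  classical
  obtain ⟨p, ⟨u, v, huv⟩, hpM⟩ := hM
  refine ⟨p.coeffs ∪ u.coeffs ∪ v.coeffs, fun R M' hs hM' => ?_⟩
  have hlift {q : K[X]} (hq : q.coeffs ⊆ p.coeffs ∪ u.coeffs ∪ v.coeffs) :
      ∃ q' : R[X], q'.map (algebraMap R K) = q :=
    (lifts_iff_set_range q).1 <| (lifts_iff_coeffs_subset_range q).2 fun c hc =>
      ⟨⟨c, hs (hq hc)⟩, rfl⟩
  obtain ⟨p, rfl⟩ := hlift (Finset.subset_union_left.trans Finset.subset_union_left)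
  obtain ⟨u, rfl⟩ := hlift (Finset.subset_union_right.trans Finset.subset_union_left)
  obtain ⟨v, rfl⟩ := hlift Finset.subset_union_right
  refine ⟨p, ⟨u, v, map_injective (algebraMap R K) Subtype.val_injective ?_⟩,
    mapMatrix_algebraMap_injective R ?_⟩
  · simpa [derivative_map] using huv
  · rw [map_zero, ← aeval_mapMatrix, hM', hpM]

theorem exists_finset_forall_subalgebra_exists_map_eq (g : GL ι K) :
    ∃ s : Finset K, ∀ R : Subalgebra k K, (s : Set K) ⊆ R →
      ∃ g' : GL ι R, Matrix.GeneralLinearGroup.map (algebraMap R K) g' = g ∧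
        (IsSeparablyAnnihilated g.1 → IsSeparablyAnnihilated g'.1) := by
  classical
  let entries (M : Matrix ι ι K) : Finset K := Finset.univ.image fun ij : ι × ι => M ij.1 ij.2
  have hentries (M : Matrix ι ι K) (i j : ι) : M i j ∈ entries M :=
    Finset.mem_image_of_mem (fun ij : ι × ι => M ij.1 ij.2) (Finset.mem_univ (i, j))
  obtain ⟨s, hs⟩ : ∃ s : Finset K, ∀ (R : Subalgebra k K) (M' : Matrix ι ι R), (s : Set K) ⊆ R →
      (algebraMap R K).mapMatrix M' = g.1 → IsSeparablyAnnihilated g.1 →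
        IsSeparablyAnnihilated M' := by
    by_cases hg : IsSeparablyAnnihilated g.1
    · obtain ⟨s, hs⟩ := hg.exists_finset (k := k)
      exact ⟨s, fun R M' hsR hM' _ => hs R M' hsR hM'⟩
    · exact ⟨∅, fun _ _ _ _ h => absurd h hg⟩
  refine ⟨entries g.1 ∪ entries g⁻¹.1 ∪ s, fun R hR => ?_⟩
  simp only [Finset.coe_union, Set.union_subset_iff] at hR
  obtain ⟨g', hg'⟩ := exists_map_eq_of_forall_mem (fun i j => hR.1.1 (hentries g.1 i j))
    fun i j => hR.1.2 (hentries g⁻¹.1 i j)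
  exact ⟨g', hg', hs R g'.1 hR.2 (congrArg Units.val hg')⟩

variable (k) in
theorem exists_finiteType_subalgebra_forall_exists_map_eq {α : Type*} [Finite α]
    (γ : α → GL ι K) : ∃ R : Subalgebra k K, Algebra.FiniteType k R ∧
      ∀ i, ∃ g : GL ι R, Matrix.GeneralLinearGroup.map (algebraMap R K) g = γ i ∧
        (IsSeparablyAnnihilated (γ i).1 → IsSeparablyAnnihilated g.1) := by
  classical
  have := Fintype.ofFinite α
  choose s hs using fun i => exists_finset_forall_subalgebra_exists_map_eq (k := k) (γ i)
  refine ⟨Algebra.adjoin k (Finset.univ.biUnion s),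
    (Subalgebra.fg_iff_finiteType _).1 ⟨_, rfl⟩, fun i => hs i _ ?_⟩
  exact (Finset.coe_subset.2 (Finset.subset_biUnion_of_mem s (Finset.mem_univ i))).trans
    Algebra.subset_adjoin

theorem exists_comp_eq_of_closure_eq_top {G A B : Type*} [Group G] [Group A] [Group B] {X : Set G}
    (hX : Subgroup.closure X = ⊤) {f : G →* B} {ι : A →* B} (hι : Function.Injective ι)
    (h : ∀ x ∈ X, f x ∈ ι.range) : ∃ ρ : G →* A, ι.comp ρ = f := by
  have hf (g : G) : f g ∈ ι.range :=
    (Subgroup.closure_le (ι.range.comap f)).2 h (hX ▸ Subgroup.mem_top g)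
  exact ⟨(MonoidHom.ofInjective hι).symm.toMonoidHom.comp (f.codRestrict ι.range hf),
    MonoidHom.ext fun _ => MonoidHom.apply_ofInjective_symm hι _⟩

variable (k) in
theorem exists_finiteType_subalgebra_exists_injective {G α : Type*} [Group G] [Finite α]
    {γ : α → G} (hγ : Subgroup.closure (Set.range γ) = ⊤) {f : G →* GL ι K}
    (hf : Function.Injective f) :
    ∃ (R : Subalgebra k K) (ρ : G →* GL ι R), Algebra.FiniteType k R ∧ Function.Injective ρ ∧
      ∀ i, IsSeparablyAnnihilated (f (γ i)).1 → IsSeparablyAnnihilated (ρ (γ i)).1 := by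
  obtain ⟨R, hR, hlift⟩ := exists_finiteType_subalgebra_forall_exists_map_eq k fun i => f (γ i)
  choose g hg hsep using hlift
  have hinj := map_algebraMap_injective (ι := ι) R
  obtain ⟨ρ, hρ⟩ := exists_comp_eq_of_closure_eq_top hγ hinj
    (Set.forall_mem_range.2 fun i => ⟨g i, hg i⟩)
  have hργ (i : α) : ρ (γ i) = g i := hinj ((DFunLike.congr_fun hρ _).trans (hg i).symm)
  refine ⟨R, ρ, hR, fun x y hxy => hf ?_, fun i hi => hργ i ▸ hsep i hi⟩
  rw [← hρ]
  exact congrArg (Matrix.GeneralLinearGroup.map (algebraMap R K)) hxy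

end Semisimplicity

section Reduction

variable {n r : ℕ} {G : Type*} [Group G] {γ : Fin r → G}

theorem exists_forall_derivedSeries_powSubgroup_eq_bot {R : Type*} [CommRing R] [IsDomain R]
    [Algebra ℚ R] [Algebra.FiniteType ℚ R] {ρ : G →* GL (Fin n) R} (hρ : Function.Injective ρ)
    (H : ∀ (F : Type) [Field F] [NumberField F] (φ : R →+* F),
      IsVirtuallySolvable ((Matrix.GeneralLinearGroup.map φ).comp ρ).range) :
    ∃ N, 0 < N ∧ derivedSeries (powSubgroup G N) n = ⊥ := by
  obtain ⟨D, hD⟩ := exists_numberField_ringHom_ne_zero R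
  refine ⟨_, Nat.factorial_pos (2 * (D * (n * n))),
    derivedSeries_powSubgroup_eq_bot_of_separating fun g hg => ?_⟩
  obtain ⟨i, j, hij⟩ : ∃ i j, (ρ g).1 i j ≠ (1 : GL (Fin n) R).1 i j := by
    by_contra! h
    exact hg (hρ ((Units.ext (Matrix.ext h)).trans (map_one ρ).symm))
  obtain ⟨F, _, _, φ, hφ, hF⟩ := hD _ (sub_ne_zero.2 hij)
  let f := (Matrix.GeneralLinearGroup.map φ).comp ρ
  refine ⟨f.range, inferInstance, f.rangeRestrict, fun hfg => hφ ?_,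
    derivedSeries_powSubgroup_eq_bot hF f.range (H F φ)⟩
  have hmap : Matrix.GeneralLinearGroup.map φ (ρ g) = Matrix.GeneralLinearGroup.map φ 1 :=
    (congrArg Subtype.val hfg).trans (map_one _).symm
  rw [map_sub, sub_eq_zero]
  exact congrArg (fun M : GL (Fin n) F => M.1 i j) hmap

theorem BoundedlyGenerates.isVirtuallySolvable (hγ : BoundedlyGenerates γ) {R : Type*} [CommRing R]
    [IsDomain R] [Algebra ℚ R] [Algebra.FiniteType ℚ R] {ρ : G →* GL (Fin n) R}
    (hρ : Function.Injective ρ)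
    (H : ∀ (F : Type) [Field F] [NumberField F] (φ : R →+* F),
      IsVirtuallySolvable ((Matrix.GeneralLinearGroup.map φ).comp ρ).range) :
    IsVirtuallySolvable G := by
  obtain ⟨N, hN, hsol⟩ := exists_forall_derivedSeries_powSubgroup_eq_bot hρ H
  exact ⟨powSubgroup G N, hγ.finiteIndex_powSubgroup hN, ⟨⟨n, hsol⟩⟩⟩

end Reduction

/-- Reduction to number fields: if every subgroup of `GL_n(F)`, `F` a number field, that is
boundedly generated by elements at most one of which is not semi-simple is virtually solvable,
then the same holds for subgroups of `GL_n(K)` over any field `K` of characteristic zero. -/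
theorem stmt_6 (n : ℕ) (hn : 1 ≤ n)
    (H : ∀ (F : Type) [Field F] [NumberField F] (Δ : Subgroup (GL (Fin n) F))
      (r : ℕ) (δ : Fin r → GL (Fin n) F), (∀ i, δ i ∈ Δ) →
      (∀ x ∈ Δ, ∃ k : Fin r → ℤ, x = (List.ofFn fun i => δ i ^ k i).prod) →
      (∀ i j : Fin r, ¬ IsSemisimpleElt (δ i) → ¬ IsSemisimpleElt (δ j) → i = j) →
      IsVirtuallySolvable ↥Δ) :
    ∀ (K : Type u) [Field K] [CharZero K] (Γ : Subgroup (GL (Fin n) K))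
      (r : ℕ) (γ : Fin r → GL (Fin n) K), (∀ i, γ i ∈ Γ) →
      (∀ x ∈ Γ, ∃ k : Fin r → ℤ, x = (List.ofFn fun i => γ i ^ k i).prod) →
      (∀ i j : Fin r, ¬ IsSemisimpleElt (γ i) → ¬ IsSemisimpleElt (γ j) → i = j) →
      IsVirtuallySolvable ↥Γ := by
  intro K _ _ Γ r γ hmem hgen hss
  let γΓ (i : Fin r) : Γ := ⟨γ i, hmem i⟩
  have hγ : BoundedlyGenerates γΓ := fun x => (hgen x x.2).imp fun k hk =>
    Subtype.ext (hk.trans (map_prod_ofFn_zpow Γ.subtype γΓ k).symm)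
  obtain ⟨R, ρ, _, hρ, hsep⟩ :=
    exists_finiteType_subalgebra_exists_injective ℚ hγ.closure_range_eq_top Γ.subtype_injective
  refine hγ.isVirtuallySolvable hρ fun F _ _ φ => ?_
  let f := (Matrix.GeneralLinearGroup.map φ).comp ρ
  have hf (i : Fin r) (hi : IsSemisimpleElt (γ i)) : IsSemisimpleElt (f (γΓ i)) :=
    isSemisimpleElt_iff_isSeparablyAnnihilated.2
      ((hsep i (isSemisimpleElt_iff_isSeparablyAnnihilated.1 hi)).mapMatrix φ)
  refine H F f.range r (fun i => f (γΓ i)) (fun i => ⟨_, rfl⟩) ?_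
    fun i j hi hj => hss i j (mt (hf i) hi) (mt (hf j) hj)
  rintro _ ⟨x, rfl⟩
  obtain ⟨k, rfl⟩ := hγ x
  exact ⟨k, map_prod_ofFn_zpow f _ k⟩
end
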